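/- Let P be a polynomial with integer coefficients of degree r ≥ 2 and let s be a nonzero integer. Then there exists a positive constant C, depending only on P and s, such that for all positive integers N, the number of integers n with N ≤ n < 2N for which there exists an integer x with s·n! = P(x) is at most C·N^(33/34). -/

import Mathlib

open scoped Nat Classical

/-!
Completing the `r`-th power in `s n! = P(x)` shows that a solution `n` comes with a positive integer
`Z n` at distance `O(1 / g n)` from `g n = (c n!) ^ (1 / r)`. Let `H` be about `N ^ (1 / 34)`. Apart
from `O(N / H)` of them, the solutions in `[N, 2N)` start a cluster `n + h 1, …, n + h 12` of
solutions with distinct shifts `h i < H` divisible by `r`. There are at most `H ^ 12` tuples of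
shifts, so it suffices that each of them occurs for at most `N / H ^ 13` integers `n`.

For fixed shifts, `g (n + h i) / (g n * n ^ (h i / r))` is the value at `x = 1 / (r ^ 2 n)` of the
power series `f i = ∏ (1 + r ^ 2 j X) ^ (1 / r)`, `1 ≤ j ≤ h i`, which has integer coefficients.
Siegel's lemma yields polynomials `A i` of degree about `N / r` with small integer coefficients such
that `∑ A i * f i` vanishes at `0` to order half the number of unknown coefficients. This linear
form and its first `O(H ^ 14)` derivatives are then so small at `x` that replacing `g (n + h i)` by
`Z (n + h i)` turns them into rational numbers which, multiplied by their common denominator, become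
integers of absolute value less than `1`. So they vanish. The `f i` satisfy first-order equations
`W y' = ρ i y`, and no ratio of two of them is rational because its residues are not integers; hence
the Wronskian of the `A i * f i` is nonzero, and its degree bounds the number of points `x` at which
all these forms can vanish.
-/

namespace PolynomialFactorial

section ZeroEstimate

open Polynomial Matrix

variable {R F ι κ : Type*}

/-- The operator `A ↦ W A' + ρ A`. If `W θ' = ρ θ` then `W (A θ)' = twistedDerivative W ρ A * θ`, so
it is the action of `W d/dx` on the coefficients of `θ`. -/
noncomputable def twistedDerivative [CommRing R] (W ρ : R[X]) : R[X] →ₗ[R] R[X] :=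
  LinearMap.mulLeft R W ∘ₗ derivative + LinearMap.mulLeft R ρ

lemma twistedDerivative_apply [CommRing R] (W ρ A : R[X]) :
    twistedDerivative W ρ A = W * derivative A + ρ * A := rfl

lemma map_iterate_twistedDerivative {S : Type*} [CommRing R] [CommRing S] (f : R →+* S)
    (W ρ A : R[X]) (k : ℕ) :
    ((twistedDerivative W ρ)^[k] A).map f =
      (twistedDerivative (W.map f) (ρ.map f))^[k] (A.map f) := by
  induction k with
  | zero => rfl
  | succ k ih =>
    simp only [Function.iterate_succ_apply', ← ih, twistedDerivative_apply, Polynomial.map_add,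
      Polynomial.map_mul, derivative_map]

lemma natDegree_iterate_twistedDerivative_le [CommRing R] {W ρ A : R[X]} {D H : ℕ}
    (hW : W.natDegree ≤ H) (hρ : ρ.natDegree ≤ H) (hA : A.natDegree ≤ D) (k : ℕ) :
    ((twistedDerivative W ρ)^[k] A).natDegree ≤ D + k * H := by
  induction k with
  | zero => simpa using hA
  | succ k ih =>
    rw [Function.iterate_succ_apply', twistedDerivative_apply, Nat.succ_mul]
    have hder := natDegree_derivative_le ((twistedDerivative W ρ)^[k] A)
    exact natDegree_add_le_of_degree_le (natDegree_mul_le.trans (by omega))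
      (natDegree_mul_le.trans (by omega))

/-- Product rule: `twistedDerivative W (-ρ)` is the operator dual to `twistedDerivative W ρ`. -/
lemma mul_derivative_sum_iterate_mul [CommRing R] (S : Finset ι) (W : R[X]) (ρ A l : ι → R[X])
    (k : ℕ) :
    W * derivative (∑ i ∈ S, (twistedDerivative W (ρ i))^[k] (A i) * l i) =
      ∑ i ∈ S, (twistedDerivative W (ρ i))^[k + 1] (A i) * l i +
        ∑ i ∈ S, (twistedDerivative W (ρ i))^[k] (A i) * twistedDerivative W (-ρ i) (l i) := by
  rw [derivative_sum, Finset.mul_sum, ← Finset.sum_add_distrib]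
  refine Finset.sum_congr rfl fun i _ => ?_
  rw [Function.iterate_succ_apply', twistedDerivative_apply, twistedDerivative_apply,
    derivative_mul]
  ring

/-- The equation `W y' = σ y` has no nonzero rational solution `y = m / l`. -/
def NoRationalSolution [CommRing R] (W σ : R[X]) : Prop :=
  ∀ l m : R[X], l ≠ 0 → m ≠ 0 → W * (l * derivative m - derivative l * m) ≠ σ * (l * m)

lemma NoRationalSolution.neg [CommRing R] {W σ : R[X]} (h : NoRationalSolution W σ) :
    NoRationalSolution W (-σ) := fun l m hl hm hlm =>
  h m l hm hl (by linear_combination -hlm)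

/-- If `l a ≠ 0`, then subtracting `d a` times the relations for `l` from `l a` times those for the
dual derivatives `d` eliminates the index `a`. By induction every nonzero `l i / l a` is then a
rational solution of the equation excluded by `hρ`. -/
lemma eq_zero_of_sum_iterate_mul_eq_zero [CommRing R] [IsDomain R] {W : R[X]} {ρ A : ι → R[X]}
    (hρ : Pairwise fun i j => NoRationalSolution W (ρ j - ρ i)) (hA : ∀ i, A i ≠ 0)
    (S : Finset ι) (l : ι → R[X])
    (hl : ∀ k < S.card, ∑ i ∈ S, (twistedDerivative W (ρ i))^[k] (A i) * l i = 0) :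
    ∀ i ∈ S, l i = 0 := by
  induction S using Finset.induction_on generalizing l with
  | empty => simp
  | insert a S ha ih =>
    rw [Finset.card_insert_of_notMem ha] at hl
    suffices hla : l a = 0 by
      refine Finset.forall_mem_insert .. |>.2 ⟨hla, ih l fun k hk => ?_⟩
      simpa [Finset.sum_insert ha, hla] using hl k (by omega)
    by_contra hla
    let d i := twistedDerivative W (-ρ i) (l i)
    have hd : ∀ k < S.card,
        ∑ i ∈ insert a S, (twistedDerivative W (ρ i))^[k] (A i) * d i = 0 := fun k hk => by
      have hder := mul_derivative_sum_iterate_mul (insert a S) W ρ A l k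
      rw [hl k (by omega), hl (k + 1) (by omega)] at hder
      simpa using hder.symm
    have hdet : ∀ i ∈ S, l a * d i - d a * l i = 0 := by
      refine ih (fun i => l a * d i - d a * l i) fun k hk => ?_
      have hla' := hl k (by omega)
      have hda := hd k hk
      rw [Finset.sum_insert ha] at hla' hda
      simp only [mul_sub, Finset.sum_sub_distrib, mul_left_comm _ (l a), mul_left_comm _ (d a),
        ← Finset.mul_sum]
      linear_combination l a * hda - d a * hla'
    have hzero : ∀ i ∈ S, l i = 0 := fun i hi => by
      by_contra hli
      have hdi := hdet i hi
      refine hρ (ne_of_mem_of_not_mem hi ha).symm (l a) (l i) hla hli ?_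
      simp only [d, twistedDerivative_apply] at hdi
      linear_combination hdi
    have hl0 := hl 0 (by omega)
    rw [Finset.sum_insert ha, Finset.sum_eq_zero fun i hi => by rw [hzero i hi, mul_zero],
      add_zero] at hl0
    exact (mul_ne_zero (hA a) hla) hl0

/-- The matrix whose `k`-th row consists of the `k`-th twisted derivatives of the `A i`; up to
normalisation, its determinant is the Wronskian of the functions `A i * θ i`, `W (θ i)' = ρ i θ i`.
-/
noncomputable def twistedWronskian [CommRing R] [Fintype ι] (W : R[X]) (ρ A : ι → R[X]) :
    Matrix ι ι R[X] :=
  .of fun i j => (twistedDerivative W (ρ j))^[Fintype.equivFin ι i] (A j)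

lemma twistedWronskian_mulVec [CommRing R] [Fintype ι] (W : R[X]) (ρ A l : ι → R[X]) (i : ι) :
    (twistedWronskian W ρ A *ᵥ l) i =
      ∑ j, (twistedDerivative W (ρ j))^[Fintype.equivFin ι i] (A j) * l j := rfl

lemma det_twistedWronskian_ne_zero [CommRing R] [IsDomain R] [Fintype ι] {W : R[X]}
    {ρ A : ι → R[X]} (hρ : Pairwise fun i j => NoRationalSolution W (ρ j - ρ i))
    (hA : ∀ i, A i ≠ 0) : (twistedWronskian W ρ A).det ≠ 0 := by
  intro h0
  obtain ⟨l, hl, hker⟩ := exists_mulVec_eq_zero_iff.2 h0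
  refine hl (funext fun i => ?_)
  refine eq_zero_of_sum_iterate_mul_eq_zero hρ hA Finset.univ l (fun k hk => ?_) i
    (Finset.mem_univ _)
  simpa [twistedWronskian_mulVec] using congrFun hker ((Fintype.equivFin ι).symm ⟨k, hk⟩)

lemma natDegree_det_le [CommRing R] [Fintype ι] {M : Matrix ι ι R[X]} {B : ℕ}
    (hM : ∀ i j, (M i j).natDegree ≤ B) : M.det.natDegree ≤ Fintype.card ι * B := by
  rw [det_apply]
  refine natDegree_sum_le_of_forall_le _ _ fun σ _ => ?_
  calc _ ≤ ∑ i, (M (σ i) i).natDegree :=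
        (natDegree_smul_le _ _).trans (natDegree_prod_le _ _)
    _ ≤ _ := Finset.sum_le_card_nsmul _ _ B fun i _ => hM _ _

lemma natDegree_det_twistedWronskian_le [CommRing R] [Fintype ι] {W : R[X]} {ρ A : ι → R[X]}
    {D H : ℕ} (hW : W.natDegree ≤ H) (hρ : ∀ i, (ρ i).natDegree ≤ H)
    (hA : ∀ i, (A i).natDegree ≤ D) :
    (twistedWronskian W ρ A).det.natDegree ≤ Fintype.card ι * (D + Fintype.card ι * H) := by
  refine natDegree_det_le fun i j => ?_
  have hi := (Fintype.equivFin ι i).isLt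
  exact (natDegree_iterate_twistedDerivative_le hW (hρ j) (hA j) _).trans (by gcongr)

section Field

variable [Field F]

lemma isCoprime_X_sub_C_pow {f : F[X]} {z : F} (hf : f.eval z ≠ 0) (k : ℕ) :
    IsCoprime ((X - C z) ^ k) f :=
  .pow_left <| (irreducible_X_sub_C z).coprime_iff_not_dvd.2 <| by rwa [dvd_iff_isRoot]

/-- A rational solution of `W y' = σ y` has residue `σ(z) / W'(z)` at `z` in its logarithmic
derivative. -/
lemma noRationalSolution_of_isRoot {W σ : F[X]} {z : F} (hW : W.IsRoot z)
    (hσ : ∀ e : ℤ, σ.eval z ≠ e * W.derivative.eval z) : NoRationalSolution W σ := by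
  intro l m hl hm hlm
  obtain ⟨l₁, hl₁, hzl⟩ := exists_eq_pow_rootMultiplicity_mul_and_not_dvd l hl z
  obtain ⟨m₁, hm₁, hzm⟩ := exists_eq_pow_rootMultiplicity_mul_and_not_dvd m hm z
  obtain ⟨V, rfl⟩ := dvd_iff_isRoot.2 hW
  set a := l.rootMultiplicity z
  set b := m.rootMultiplicity z
  have hder (c : ℕ) (f : F[X]) : (X - C z) * derivative ((X - C z) ^ c * f) =
      (X - C z) ^ c * ((c : F[X]) * f + (X - C z) * derivative f) := by
    cases c with
    | zero => simp
    | succ c =>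
      rw [derivative_mul, derivative_X_sub_C_pow, map_natCast, Nat.add_sub_cancel]
      ring
  have hreduced : V * (l₁ * ((b : F[X]) * m₁ + (X - C z) * derivative m₁) -
      ((a : F[X]) * l₁ + (X - C z) * derivative l₁) * m₁) = σ * (l₁ * m₁) := by
    refine mul_left_cancel₀ (pow_ne_zero (a + b) (X_sub_C_ne_zero z)) ?_
    rw [hl₁, hm₁] at hlm
    linear_combination hlm - V * (X - C z) ^ a * l₁ * hder b m₁ +
      V * (X - C z) ^ b * m₁ * hder a l₁
  rw [dvd_iff_isRoot] at hzl hzm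
  refine hσ (b - a) (mul_right_cancel₀ (mul_ne_zero hzl hzm) ?_)
  have heval := congrArg (eval z) hreduced
  simp only [eval_mul, eval_add, eval_sub, eval_X, eval_C, eval_natCast, derivative_mul,
    derivative_sub, derivative_X, derivative_C, eval_one, eval_zero, Int.cast_sub,
    Int.cast_natCast] at heval ⊢
  linear_combination -heval

variable [CharZero F]

lemma X_sub_C_pow_succ_dvd_of_dvd_derivative {f : F[X]} {z : F} {t : ℕ} (hz : f.eval z = 0)
    (h : (X - C z) ^ t ∣ derivative f) : (X - C z) ^ (t + 1) ∣ f := by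
  by_cases hf : f = 0
  · simp [hf]
  have hder : derivative f ≠ 0 := fun h' => hf <| by
    rw [eq_C_of_derivative_eq_zero h'] at hz ⊢
    simpa using hz
  rw [← le_rootMultiplicity_iff hder, derivative_rootMultiplicity_of_root hz] at h
  rw [← le_rootMultiplicity_iff hf]
  have hpos : 0 < f.rootMultiplicity z := (rootMultiplicity_pos hf).2 hz
  omega

lemma exists_eval_eq_and_dvd_twistedDerivative {W : F[X]} {z : F} (hW : W.eval z ≠ 0) (ρ : F[X])
    (v : F) (K : ℕ) :
    ∃ l : F[X], l.eval z = v ∧ (X - C z) ^ K ∣ twistedDerivative W ρ l := by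
  induction K with
  | zero => exact ⟨C v, by simp, by simp⟩
  | succ K ih =>
    obtain ⟨l, hl, q, hq⟩ := ih
    have hK : (K + 1 : F) ≠ 0 := Nat.cast_add_one_ne_zero K
    let c : F := -q.eval z / ((K + 1) * W.eval z)
    refine ⟨l + C c * (X - C z) ^ (K + 1), by simp [hl], ?_⟩
    have hfactor : twistedDerivative W ρ (l + C c * (X - C z) ^ (K + 1)) =
        (X - C z) ^ K * (q + C (c * (K + 1)) * W + ρ * C c * (X - C z)) := by
      rw [map_add, hq, twistedDerivative_apply, derivative_C_mul, derivative_X_sub_C_pow]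
      simp only [Nat.add_sub_cancel, map_mul, map_add, map_natCast, map_one, Nat.cast_add,
        Nat.cast_one]
      ring
    rw [hfactor, pow_succ]
    refine mul_dvd_mul_left _ (dvd_iff_isRoot.2 ?_)
    simp only [IsRoot.def, eval_add, eval_mul, eval_C, eval_sub, eval_X, sub_self, mul_zero, c]
    field_simp
    ring

lemma X_sub_C_pow_dvd_sum_iterate_mul {W : F[X]} {z : F} (hW : W.eval z ≠ 0) (S : Finset ι)
    {ρ A l : ι → F[X]} {s K : ℕ}
    (hl : ∀ i ∈ S, (X - C z) ^ K ∣ twistedDerivative W (-ρ i) (l i))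
    (h : ∀ k < s + K, (∑ i ∈ S, (twistedDerivative W (ρ i))^[k] (A i) * l i).eval z = 0)
    {t : ℕ} (ht : t ≤ K) {k : ℕ} (hk : k + t < s + K) :
    (X - C z) ^ (t + 1) ∣ ∑ i ∈ S, (twistedDerivative W (ρ i))^[k] (A i) * l i := by
  induction t generalizing k with
  | zero => simpa using dvd_iff_isRoot.2 (h k hk)
  | succ t ih =>
    refine X_sub_C_pow_succ_dvd_of_dvd_derivative (h k (by omega)) ?_
    refine (isCoprime_X_sub_C_pow hW (t + 1)).dvd_of_dvd_mul_left ?_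
    rw [mul_derivative_sum_iterate_mul]
    exact dvd_add (ih (by omega) (by omega)) <| Finset.dvd_sum fun i hi =>
      ((pow_dvd_pow _ ht).trans (hl i hi)).mul_left _

/-- Solutions of the dual equation modulo `(X - z) ^ K` with the prescribed values at `z` give a
vector which is killed by the twisted Wronskian modulo `(X - z) ^ (K + 1)`. -/
lemma X_sub_C_pow_dvd_det_twistedWronskian [Fintype ι] {W : F[X]} {ρ A : ι → F[X]} {z : F}
    (hW : W.eval z ≠ 0) {v : ι → F} (hv : v ≠ 0) {K : ℕ}
    (h : ∀ k < Fintype.card ι + K,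
      ∑ i, ((twistedDerivative W (ρ i))^[k] (A i)).eval z * v i = 0) :
    (X - C z) ^ (K + 1) ∣ (twistedWronskian W ρ A).det := by
  choose l hlv hl using fun i => exists_eval_eq_and_dvd_twistedDerivative hW (-ρ i) (v i) K
  have hrow (i : ι) : (X - C z) ^ (K + 1) ∣ (twistedWronskian W ρ A *ᵥ l) i := by
    refine X_sub_C_pow_dvd_sum_iterate_mul hW Finset.univ (s := Fintype.card ι)
      (fun j _ => hl j) (fun k hk => ?_) le_rfl (by simp)
    simpa only [eval_finsetSum, eval_mul, hlv] using h k hk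
  obtain ⟨i₀, hi₀⟩ := Function.ne_iff.1 hv
  have hcramer : ((twistedWronskian W ρ A).adjugate *ᵥ (twistedWronskian W ρ A *ᵥ l)) i₀ =
      (twistedWronskian W ρ A).det * l i₀ := by
    simp [mulVec_mulVec, adjugate_mul, smul_mulVec]
  refine (isCoprime_X_sub_C_pow (f := l i₀) (by rwa [hlv]) _).dvd_of_dvd_mul_right ?_
  rw [← hcramer]
  exact Finset.dvd_sum fun j _ => (hrow j).mul_left _

lemma exists_sum_iterate_eval_mul_ne_zero_of_forall_ne_zero [Fintype ι] {W : F[X]}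
    {ρ A : ι → F[X]} (hρ : Pairwise fun i j => NoRationalSolution W (ρ j - ρ i))
    (hA : ∀ i, A i ≠ 0) {D H K : ℕ} (hWd : W.natDegree ≤ H) (hρd : ∀ i, (ρ i).natDegree ≤ H)
    (hAd : ∀ i, (A i).natDegree ≤ D) {S : Finset κ} {z : κ → F} (hz : Set.InjOn z S)
    (hW : ∀ n ∈ S, W.eval (z n) ≠ 0) {v : κ → ι → F} (hv : ∀ n ∈ S, v n ≠ 0)
    (hK : Fintype.card ι * (D + Fintype.card ι * H) < S.card * (K + 1)) :
    ∃ n ∈ S, ∃ k < Fintype.card ι + K,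
      ∑ i, ((twistedDerivative W (ρ i))^[k] (A i)).eval (z n) * v n i ≠ 0 := by
  by_contra! hzero
  have hdvd : ∏ n ∈ S, (X - C (z n)) ^ (K + 1) ∣ (twistedWronskian W ρ A).det :=
    Finset.prod_dvd_of_coprime
      (fun a ha b hb hab =>
        (isCoprime_X_sub_C_of_isUnit_sub (sub_ne_zero.2 (hz.ne ha hb hab)).isUnit).pow)
      fun n hn => X_sub_C_pow_dvd_det_twistedWronskian (hW n hn) (hv n hn) (hzero n hn)
  have hdeg := natDegree_le_of_dvd hdvd (det_twistedWronskian_ne_zero hρ hA)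
  rw [natDegree_prod_of_monic _ _ fun n _ => (monic_X_sub_C (z n)).pow _] at hdeg
  simp only [natDegree_pow, natDegree_X_sub_C, mul_one, Finset.sum_const, smul_eq_mul] at hdeg
  have := natDegree_det_twistedWronskian_le hWd hρd hAd
  omega

/-- A linear form `∑ Aᵢ yᵢ` in solutions of `W yᵢ' = ρᵢ yᵢ` and its derivatives cannot vanish at
too many points, however the nonzero values `v n i` of the `yᵢ` at each point are prescribed. -/
theorem exists_sum_iterate_eval_mul_ne_zero [Fintype ι] {W : F[X]} {ρ A : ι → F[X]}
    (hρ : Pairwise fun i j => NoRationalSolution W (ρ j - ρ i)) (hA : A ≠ 0) {D H K : ℕ}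
    (hWd : W.natDegree ≤ H) (hρd : ∀ i, (ρ i).natDegree ≤ H) (hAd : ∀ i, (A i).natDegree ≤ D)
    {S : Finset κ} {z : κ → F} (hz : Set.InjOn z S) (hW : ∀ n ∈ S, W.eval (z n) ≠ 0)
    {v : κ → ι → F} (hv : ∀ n ∈ S, ∀ i, v n i ≠ 0)
    (hK : Fintype.card ι * (D + Fintype.card ι * H) < S.card * (K + 1)) :
    ∃ n ∈ S, ∃ k < Fintype.card ι + K,
      ∑ i, ((twistedDerivative W (ρ i))^[k] (A i)).eval (z n) * v n i ≠ 0 := by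
  obtain ⟨i₀, hi₀⟩ := Function.ne_iff.1 hA
  have hcard : Fintype.card {i // A i ≠ 0} ≤ Fintype.card ι := Fintype.card_subtype_le _
  obtain ⟨n, hn, k, hk, hne⟩ := exists_sum_iterate_eval_mul_ne_zero_of_forall_ne_zero
    (ι := {i // A i ≠ 0}) (ρ := fun i => ρ i) (A := fun i => A i) (v := fun n i => v n i)
    (fun i j hij => hρ (Subtype.coe_injective.ne hij)) (fun i => i.2) hWd (fun i => hρd i)
    (fun i => hAd i) hz hW (fun n hn => Function.ne_iff.2 ⟨⟨i₀, hi₀⟩, hv n hn i₀⟩)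
    (hK.trans_le' (by gcongr))
  refine ⟨n, hn, k, by omega, ?_⟩
  rwa [← Fintype.sum_of_injective (Subtype.val : {i // A i ≠ 0} → ι) Subtype.val_injective _ _
    (fun i hi => ?_) fun _ => rfl]
  have hAi : A i = 0 := by simpa using hi
  rw [hAi, iterate_map_zero, eval_zero, zero_mul]

end Field

end ZeroEstimate

section RootSeries

open PowerSeries

variable {R : Type*} [CommRing R]

lemma exists_constantCoeff_eq_one_and_pow_succ_eq {r : ℕ} {q : Polynomial R⟦X⟧}
    (hq : q.natDegree ≤ r) :
    ∃ v : R⟦X⟧, constantCoeff v = 1 ∧ v ^ (r + 1) = v ^ r + X * q.eval v := by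
  let p : Polynomial R⟦X⟧ := .X ^ (r + 1) + -(.X ^ r + .C X * q)
  have hp : p.Monic := Polynomial.monic_X_pow_add <|
    (Polynomial.degree_le_of_natDegree_le <| (Polynomial.natDegree_neg _).trans_le <|
      Polynomial.natDegree_add_le_of_degree_le (Polynomial.natDegree_X_pow_le r)
        ((Polynomial.natDegree_C_mul_le _ _).trans hq)).trans_lt (by exact_mod_cast r.lt_succ_self)
  have hp_one : p.eval 1 ∈ Ideal.span {X} := by
    simp [p, Ideal.mem_span_singleton]
  have hp_deriv : p.derivative.eval 1 - 1 ∈ Ideal.span {X} := by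
    rw [Ideal.mem_span_singleton]
    refine ⟨-q.derivative.eval 1, ?_⟩
    simp [p, Polynomial.derivative_X_pow]
    ring
  obtain ⟨v, hv, hv_one⟩ := HenselianRing.is_henselian p hp 1 hp_one <| by
    rw [(Ideal.Quotient.mk_eq_mk_iff_sub_mem _ _).2 hp_deriv, map_one]
    exact isUnit_one
  refine ⟨v, ?_, ?_⟩
  · rw [Ideal.mem_span_singleton, X_dvd_iff, map_sub, map_one] at hv_one
    exact sub_eq_zero.1 hv_one
  · have hv_eval : v ^ (r + 1) + -(v ^ r + X * q.eval v) = 0 := by simpa [p] using hv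
    linear_combination hv_eval

/-- Substituting `f = 1 + r X / v` turns `f ^ r = 1 + r ^ 2 X` into a monic equation for `v` with a
simple root modulo `X`, to which Hensel's lemma applies. -/
lemma exists_constantCoeff_eq_one_and_pow_eq (R : Type*) [CommRing R] (r : ℕ) :
    ∃ f : R⟦X⟧, constantCoeff f = 1 ∧ f ^ r = 1 + C (r : R) ^ 2 * X := by
  obtain _ | r := r
  · exact ⟨1, by simp⟩
  let a : R⟦X⟧ := C ((r + 1 : ℕ) : R)
  let q : Polynomial R⟦X⟧ := ∑ k ∈ Finset.range r,
    .C ((a * X) ^ k * ((r + 1).choose (k + 2) : R⟦X⟧)) * .X ^ (r - (k + 1))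
  obtain ⟨v, hv, hroot⟩ := exists_constantCoeff_eq_one_and_pow_succ_eq (q := q) <|
    Polynomial.natDegree_sum_le_of_forall_le _ _ fun k _ =>
      (Polynomial.natDegree_C_mul_X_pow_le _ _).trans (Nat.sub_le r _)
  have hbinom : (a * X + v) ^ (r + 1) = v ^ (r + 1) + a ^ 2 * X * (v ^ r + X * q.eval v) := by
    have hq : a ^ 2 * X * (X * q.eval v) = ∑ k ∈ Finset.range r,
        (a * X) ^ (k + 1 + 1) * v ^ (r + 1 - (k + 1 + 1)) *
          ((r + 1).choose (k + 1 + 1) : R⟦X⟧) := by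
      simp only [q, Polynomial.eval_finsetSum, Polynomial.eval_mul, Polynomial.eval_C,
        Polynomial.eval_pow, Polynomial.eval_X, Finset.mul_sum, Nat.add_sub_add_right]
      exact Finset.sum_congr rfl fun k _ => by ring
    rw [add_pow, Finset.sum_range_succ', Finset.sum_range_succ', ← hq]
    simp [a]
    ring
  obtain ⟨u, rfl⟩ : IsUnit v := by simp [isUnit_iff_constantCoeff, hv]
  refine ⟨1 + a * X * ((u⁻¹ : R⟦X⟧ˣ) : R⟦X⟧), by simp, (u.isUnit.pow (r + 1)).mul_right_cancel ?_⟩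
  rw [← mul_pow, add_mul, one_mul, mul_assoc, Units.inv_mul, mul_one, add_comm, hbinom, ← hroot]
  ring

/-- An `r`-th root of `1 + r ^ 2 X` with integer coefficients. -/
noncomputable def rootSeries (r : ℕ) : ℤ⟦X⟧ :=
  (exists_constantCoeff_eq_one_and_pow_eq ℤ r).choose

lemma constantCoeff_rootSeries (r : ℕ) : constantCoeff (rootSeries r) = 1 :=
  (exists_constantCoeff_eq_one_and_pow_eq ℤ r).choose_spec.1

lemma rootSeries_pow (r : ℕ) : rootSeries r ^ r = 1 + C (r : ℤ) ^ 2 * X :=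
  (exists_constantCoeff_eq_one_and_pow_eq ℤ r).choose_spec.2

lemma derivative_rootSeries {r : ℕ} (hr : r ≠ 0) :
    (1 + C (r : ℤ) ^ 2 * X) * d⁄dX ℤ (rootSeries r) = C (r : ℤ) * rootSeries r := by
  have hder := congrArg (d⁄dX ℤ) (rootSeries_pow r)
  rw [derivative_pow, map_add, derivative_one, ← map_pow C, Derivation.leibniz, derivative_C,
    derivative_X] at hder
  simp only [smul_eq_mul, map_pow] at hder
  have hr' : C (r : ℤ) ≠ 0 := (map_ne_zero_iff C C_injective).2 (Nat.cast_ne_zero.2 hr)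
  refine mul_left_cancel₀ hr' ?_
  rw [← rootSeries_pow, ← mul_pow_sub_one hr (rootSeries r)]
  rw [← map_natCast (C (R := ℤ))] at hder
  linear_combination rootSeries r * hder

lemma succ_mul_coeff_succ_rootSeries {r : ℕ} (hr : r ≠ 0) (l : ℕ) :
    ((l : ℤ) + 1) * coeff (l + 1) (rootSeries r) = (r - r ^ 2 * l) * coeff l (rootSeries r) := by
  have h := congrArg (coeff l) (derivative_rootSeries hr)
  have hX : coeff l (X * d⁄dX ℤ (rootSeries r)) = l * coeff l (rootSeries r) := by
    cases l with
    | zero => simp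
    | succ l =>
      rw [coeff_succ_X_mul, coeff_derivative, Nat.cast_succ]
      ring
  rw [add_mul, one_mul, map_add, mul_assoc, ← map_pow C, coeff_C_mul, coeff_C_mul, hX,
    coeff_derivative] at h
  linear_combination h

lemma abs_coeff_rootSeries_le {r : ℕ} (hr : r ≠ 0) (l : ℕ) :
    |coeff l (rootSeries r)| ≤ ((r : ℤ) ^ 2) ^ l := by
  induction l with
  | zero => simp [constantCoeff_rootSeries]
  | succ l ih =>
    have hr1 : (1 : ℤ) ≤ r := by exact_mod_cast Nat.one_le_iff_ne_zero.2 hr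
    have hfactor : |(r : ℤ) - r ^ 2 * l| ≤ (l + 1) * r ^ 2 := by
      have hl : (0 : ℤ) ≤ (r : ℤ) ^ 2 * l := by positivity
      rw [abs_le]
      constructor <;> nlinarith
    have hl : (0 : ℤ) < l + 1 := by positivity
    refine le_of_mul_le_mul_left ?_ hl
    calc (l + 1 : ℤ) * |coeff (l + 1) (rootSeries r)|
        = |(r : ℤ) - r ^ 2 * l| * |coeff l (rootSeries r)| := by
          rw [← abs_mul, ← succ_mul_coeff_succ_rootSeries hr, abs_mul, abs_of_pos hl]
      _ ≤ (l + 1) * r ^ 2 * ((r : ℤ) ^ 2) ^ l := by gcongr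
      _ = (l + 1) * ((r : ℤ) ^ 2) ^ (l + 1) := by ring

end RootSeries

section RatioSeries

open PowerSeries

lemma rescale_C {R : Type*} [CommSemiring R] (a c : R) : rescale a (C c) = C c := by
  ext n
  rw [coeff_rescale, coeff_C]
  split_ifs with hn <;> simp [hn]

lemma derivative_rescale {R : Type*} [CommRing R] (a : R) (f : R⟦X⟧) :
    d⁄dX R (rescale a f) = C a * rescale a (d⁄dX R f) := by
  ext n
  rw [coeff_derivative, coeff_rescale, coeff_C_mul, coeff_rescale, coeff_derivative]
  ring

/-- The polynomial `1 + r ^ 2 (j + 1) X`. -/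
noncomputable def linearFactor (r j : ℕ) : Polynomial ℤ :=
  1 + .C ((r : ℤ) ^ 2 * (j + 1)) * .X

/-- The polynomial `∏ (1 + r ^ 2 j X)`, `1 ≤ j ≤ h`, with value `(n + h)! / (n! n ^ h)` at
`1 / (r ^ 2 n)`. -/
noncomputable def ratioPoly (r h : ℕ) : Polynomial ℤ :=
  ∏ j ∈ Finset.range h, linearFactor r j

/-- The `r`-th root of `ratioPoly r h` with constant coefficient `1`. -/
noncomputable def ratioSeries (r h : ℕ) : ℤ⟦X⟧ :=
  ∏ j ∈ Finset.range h, rescale ((j : ℤ) + 1) (rootSeries r)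

/-- The numerator of the logarithmic derivative of `ratioSeries r h` over the denominator
`ratioPoly r H`, which does not depend on `h ≤ H`. -/
noncomputable def ratioLogDeriv (r H h : ℕ) : Polynomial ℤ :=
  ∑ j ∈ Finset.range h, .C ((r : ℤ) * (j + 1)) * ∏ i ∈ (Finset.range H).erase j, linearFactor r i

lemma coe_linearFactor (r j : ℕ) :
    (linearFactor r j : ℤ⟦X⟧) = rescale ((j : ℤ) + 1) (1 + C (r : ℤ) ^ 2 * X) := by
  simp only [linearFactor, Polynomial.coe_add, Polynomial.coe_one, Polynomial.coe_mul,
    Polynomial.coe_C, Polynomial.coe_X, map_add, map_one, map_mul, ← map_pow C, rescale_C,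
    rescale_X, mul_assoc]

lemma coe_ratioPoly (r h : ℕ) :
    (ratioPoly r h : ℤ⟦X⟧) = ∏ j ∈ Finset.range h, (linearFactor r j : ℤ⟦X⟧) := by
  simp only [ratioPoly, ← Polynomial.coeToPowerSeries.ringHom_apply, map_prod]

lemma ratioSeries_pow (r h : ℕ) : ratioSeries r h ^ r = ratioPoly r h := by
  simp only [ratioSeries, coe_ratioPoly, ← Finset.prod_pow, ← map_pow, rootSeries_pow,
    coe_linearFactor]

lemma linearFactor_mul_derivative_rescale_rootSeries {r : ℕ} (hr : r ≠ 0) (j : ℕ) :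
    linearFactor r j * d⁄dX ℤ (rescale ((j : ℤ) + 1) (rootSeries r)) =
      C ((r : ℤ) * (j + 1)) * rescale ((j : ℤ) + 1) (rootSeries r) := by
  rw [derivative_rescale, coe_linearFactor, mul_left_comm, ← map_mul (rescale _),
    derivative_rootSeries hr, map_mul, rescale_C, map_mul C]
  ring

lemma mul_derivation_prod {R A ι : Type*} [CommRing R] [CommRing A] [Algebra R A]
    (D : Derivation R A A) {W : A} {ρ f : ι → A} {S : Finset ι}
    (h : ∀ i ∈ S, W * D (f i) = ρ i * f i) :
    W * D (∏ i ∈ S, f i) = (∑ i ∈ S, ρ i) * ∏ i ∈ S, f i := by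
  induction S using Finset.induction_on with
  | empty => simp
  | insert a S ha ih =>
    have ha' := h a (Finset.mem_insert_self a S)
    have hS := ih fun i hi => h i (Finset.mem_insert_of_mem hi)
    rw [Finset.prod_insert ha, Finset.sum_insert ha, D.leibniz, smul_eq_mul, smul_eq_mul]
    linear_combination (∏ i ∈ S, f i) * ha' + f a * hS

lemma ratioPoly_mul_derivative_ratioSeries {r : ℕ} (hr : r ≠ 0) {H h : ℕ} (hh : h ≤ H) :
    ratioPoly r H * d⁄dX ℤ (ratioSeries r h) = ratioLogDeriv r H h * ratioSeries r h := by
  have hcoe : (ratioLogDeriv r H h : ℤ⟦X⟧) = ∑ j ∈ Finset.range h, C ((r : ℤ) * (j + 1)) *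
      ((∏ i ∈ (Finset.range H).erase j, linearFactor r i : Polynomial ℤ) : ℤ⟦X⟧) := by
    simp only [ratioLogDeriv, ← Polynomial.coeToPowerSeries.ringHom_apply, map_sum, map_mul]
    simp only [Polynomial.coeToPowerSeries.ringHom_apply, Polynomial.coe_C]
  rw [ratioSeries, hcoe]
  refine mul_derivation_prod _ fun j hj => ?_
  have hjH : j ∈ Finset.range H := Finset.range_mono hh hj
  rw [ratioPoly, ← Finset.mul_prod_erase _ _ hjH, Polynomial.coe_mul, mul_right_comm,
    linearFactor_mul_derivative_rescale_rootSeries hr]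
  ring

lemma derivative_ratioPoly (r h : ℕ) :
    (ratioPoly r h).derivative = .C (r : ℤ) * ratioLogDeriv r h h := by
  rw [ratioPoly, ratioLogDeriv, Polynomial.derivative_prod_finset, Finset.mul_sum]
  refine Finset.sum_congr rfl fun j _ => ?_
  rw [show (linearFactor r j).derivative = .C ((r : ℤ) ^ 2 * (j + 1)) by simp [linearFactor],
    ← mul_assoc, ← map_mul, mul_comm]
  congr 2
  ring

section NoRationalSolution

open Polynomial

variable {F : Type*} [Field F]

lemma eval_linearFactor (r j : ℕ) (z : F) :
    ((linearFactor r j).map (Int.castRingHom F)).eval z = 1 + r ^ 2 * (j + 1) * z := by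
  simp [linearFactor]

variable [CharZero F]

lemma eval_linearFactor_eq_zero_iff {r : ℕ} (hr : r ≠ 0) (j g : ℕ) :
    ((linearFactor r j).map (Int.castRingHom F)).eval (-1 / ((r : F) ^ 2 * (g + 1))) = 0 ↔
      j = g := by
  have hg : (g + 1 : F) ≠ 0 := Nat.cast_add_one_ne_zero g
  have hr' : (r : F) ≠ 0 := Nat.cast_ne_zero.2 hr
  rw [eval_linearFactor, ← @Nat.cast_inj F]
  field_simp
  constructor <;> intro h <;> linear_combination -h

lemma exists_eval_ratioLogDeriv_eq {r : ℕ} (hr : r ≠ 0) {g H : ℕ} (hg : g < H) :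
    ∃ u ≠ 0, ∀ h, ((ratioLogDeriv r H h).map (Int.castRingHom F)).eval
      (-1 / ((r : F) ^ 2 * (g + 1))) = if g < h then u else 0 := by
  let z : F := -1 / ((r : F) ^ 2 * (g + 1))
  let L i := ((linearFactor r i).map (Int.castRingHom F)).eval z
  refine ⟨r * (g + 1) * ∏ i ∈ (Finset.range H).erase g, L i, ?_, fun h => ?_⟩
  · refine mul_ne_zero (mul_ne_zero (Nat.cast_ne_zero.2 hr) (Nat.cast_add_one_ne_zero g)) ?_
    refine Finset.prod_ne_zero_iff.2 fun i hi => ?_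
    rw [Ne, eval_linearFactor_eq_zero_iff hr]
    exact Finset.ne_of_mem_erase hi
  have hterm (j : ℕ) (hj : j ≠ g) : ∏ i ∈ (Finset.range H).erase j, L i = 0 :=
    Finset.prod_eq_zero (Finset.mem_erase.2 ⟨hj.symm, Finset.mem_range.2 hg⟩)
      ((eval_linearFactor_eq_zero_iff hr g g).2 rfl)
  have hsum : ((ratioLogDeriv r H h).map (Int.castRingHom F)).eval z =
      ∑ j ∈ Finset.range h, r * (j + 1) * ∏ i ∈ (Finset.range H).erase j, L i := by
    simp [ratioLogDeriv, Polynomial.map_sum, Polynomial.map_prod, eval_finsetSum, eval_prod, L]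
  rw [hsum]
  split_ifs with hgh
  · exact Finset.sum_eq_single_of_mem g (Finset.mem_range.2 hgh) fun j _ hj => by
      rw [hterm j hj, mul_zero]
  · refine Finset.sum_eq_zero fun j hj => ?_
    rw [hterm j (by have := Finset.mem_range.1 hj; omega), mul_zero]

lemma noRationalSolution_ratioLogDeriv_sub_of_lt {r : ℕ} (hr : 2 ≤ r) {H h h' : ℕ} (hh : h < h')
    (hH : h' ≤ H) :
    NoRationalSolution ((ratioPoly r H).map (Int.castRingHom F))
      ((ratioLogDeriv r H h').map (Int.castRingHom F) -
        (ratioLogDeriv r H h).map (Int.castRingHom F)) := by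
  have hhH : h < H := hh.trans_le hH
  obtain ⟨u, hu, hu_eq⟩ := exists_eval_ratioLogDeriv_eq (F := F) (by omega : r ≠ 0) hhH
  refine noRationalSolution_of_isRoot (z := -1 / ((r : F) ^ 2 * (h + 1))) ?_ fun e he => ?_
  · rw [IsRoot.def, ratioPoly, Polynomial.map_prod, eval_prod]
    exact Finset.prod_eq_zero (Finset.mem_range.2 hhH)
      ((eval_linearFactor_eq_zero_iff (by omega) h h).2 rfl)
  rw [derivative_map, derivative_ratioPoly, Polynomial.map_mul, eval_mul, eval_sub, hu_eq, hu_eq,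
    hu_eq, if_pos hh, if_neg (lt_irrefl h), if_pos hhH, sub_zero, Polynomial.map_C, eval_C] at he
  have her : (1 : F) = (e * r : ℤ) := by
    refine mul_right_cancel₀ hu ?_
    push_cast
    simpa [mul_assoc] using he
  have hdvd : (r : ℤ) ∣ 1 := ⟨e, by rw [mul_comm]; exact_mod_cast her⟩
  have := Int.le_of_dvd one_pos hdvd
  omega

theorem noRationalSolution_ratioLogDeriv_sub {r : ℕ} (hr : 2 ≤ r) {H h h' : ℕ} (hh : h ≠ h')
    (h_le : h ≤ H) (h'_le : h' ≤ H) :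
    NoRationalSolution ((ratioPoly r H).map (Int.castRingHom F))
      ((ratioLogDeriv r H h').map (Int.castRingHom F) -
        (ratioLogDeriv r H h).map (Int.castRingHom F)) := by
  obtain hlt | hlt := hh.lt_or_gt
  · exact noRationalSolution_ratioLogDeriv_sub_of_lt hr hlt h'_le
  · rw [← neg_sub]
    exact (noRationalSolution_ratioLogDeriv_sub_of_lt hr hlt h_le).neg

end NoRationalSolution

end RatioSeries

section Majorants

open PowerSeries

/-- The geometric series `1 / (1 - R X)`. -/
noncomputable def geomSeries (R : ℝ) : ℝ⟦X⟧ := mk (R ^ ·)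

lemma derivative_geomSeries (R : ℝ) : d⁄dX ℝ (geomSeries R) = C R * geomSeries R ^ 2 := by
  ext n
  have hterm (i : ℕ × ℕ) (hi : i ∈ Finset.HasAntidiagonal.antidiagonal n) :
      R ^ i.1 * R ^ i.2 = R ^ n := by
    rw [← pow_add, Finset.HasAntidiagonal.mem_antidiagonal.1 hi]
  rw [coeff_derivative, coeff_C_mul, pow_two, coeff_mul]
  simp only [geomSeries, coeff_mk]
  rw [Finset.sum_congr rfl hterm, Finset.sum_const, Finset.Nat.card_antidiagonal, nsmul_eq_mul]
  push_cast
  ring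

lemma derivative_geomSeries_pow (R : ℝ) (p : ℕ) :
    d⁄dX ℝ (geomSeries R ^ p) = C (p * R) * geomSeries R ^ (p + 1) := by
  cases p with
  | zero => simp
  | succ p =>
    rw [derivative_pow, derivative_geomSeries, Nat.add_sub_cancel, map_mul, map_natCast]
    ring

variable {R : ℝ}

lemma coeff_geomSeries_pow_nonneg (hR : 0 ≤ R) (p n : ℕ) : 0 ≤ coeff n (geomSeries R ^ p) := by
  induction p generalizing n with
  | zero =>
    rw [pow_zero, coeff_one]
    positivity
  | succ p ih =>
    rw [pow_succ, coeff_mul]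
    exact Finset.sum_nonneg fun i _ => mul_nonneg (ih _) (by simpa [geomSeries] using by positivity)

lemma coeff_geomSeries_pow_mono (hR : 0 ≤ R) (n : ℕ) :
    Monotone fun p => coeff n (geomSeries R ^ p) := by
  refine monotone_nat_of_le_succ fun p => ?_
  rw [pow_succ, coeff_mul]
  have hle := Finset.single_le_sum (a := (n, 0)) (f := fun i : ℕ × ℕ =>
    coeff i.1 (geomSeries R ^ p) * coeff i.2 (geomSeries R)) (fun i _ => mul_nonneg
      (coeff_geomSeries_pow_nonneg hR p _) (by simpa [geomSeries] using by positivity))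
    (Finset.HasAntidiagonal.mem_antidiagonal.2 (add_zero n))
  simpa [geomSeries] using hle

lemma coeff_geomSeries_pow_le (hR : 0 ≤ R) (p n : ℕ) :
    coeff n (geomSeries R ^ p) ≤ 2 ^ p * (2 * R) ^ n := by
  have hgeom : geomSeries R = rescale R (mk 1) := by
    ext
    simp [geomSeries, coeff_rescale]
  refine (coeff_geomSeries_pow_mono hR n p.le_succ).trans ?_
  have hchoose : ((p + n).choose p : ℝ) ≤ 2 ^ (p + n) := by
    exact_mod_cast Nat.choose_le_two_pow (p + n) p
  simp only [Nat.succ_eq_add_one]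
  rw [hgeom, ← map_pow, mk_one_pow_eq_mk_choose_add, coeff_rescale, coeff_mk]
  calc R ^ n * ((p + n).choose p : ℝ) ≤ R ^ n * 2 ^ (p + n) := by gcongr
    _ = 2 ^ p * (2 * R) ^ n := by ring

variable {A : Type*}

lemma coe_twistedDerivative [CommRing A] (W ρ f : Polynomial A) :
    (twistedDerivative W ρ f : A⟦X⟧) = W * d⁄dX A f + ρ * f := by
  rw [twistedDerivative_apply, Polynomial.coe_add, Polynomial.coe_mul, Polynomial.coe_mul,
    derivative_coe]

/-- The coefficients of `f` are bounded in norm by those of `c / (1 - R X) ^ p`. -/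
def Majorized [SeminormedRing A] (R c : ℝ) (p : ℕ) (f : A⟦X⟧) : Prop :=
  ∀ n, ‖coeff n f‖ ≤ c * coeff n (geomSeries R ^ p)

namespace Majorized

lemma const_nonneg [SeminormedRing A] {c : ℝ} {p : ℕ} {f : A⟦X⟧} (h : Majorized R c p f) :
    0 ≤ c := by
  simpa [geomSeries] using (norm_nonneg _).trans (h 0)

lemma mono [SeminormedRing A] (hR : 0 ≤ R) {c c' : ℝ} {p p' : ℕ} {f : A⟦X⟧}
    (h : Majorized R c p f) (hc : c ≤ c') (hp : p ≤ p') : Majorized R c' p' f := fun n =>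
  (h n).trans <| mul_le_mul hc (coeff_geomSeries_pow_mono hR n hp)
    (coeff_geomSeries_pow_nonneg hR p n) (h.const_nonneg.trans hc)

lemma norm_coeff_le [SeminormedRing A] (hR : 0 ≤ R) {c : ℝ} {p : ℕ} {f : A⟦X⟧}
    (h : Majorized R c p f) (n : ℕ) : ‖coeff n f‖ ≤ c * 2 ^ p * (2 * R) ^ n := by
  rw [mul_assoc]
  exact (h n).trans (mul_le_mul_of_nonneg_left (coeff_geomSeries_pow_le hR p n) h.const_nonneg)

lemma add [SeminormedRing A] {c c' : ℝ} {p : ℕ} {f g : A⟦X⟧} (hf : Majorized R c p f)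
    (hg : Majorized R c' p g) : Majorized R (c + c') p (f + g) := fun n => by
  rw [map_add, add_mul]
  exact (norm_add_le _ _).trans (add_le_add (hf n) (hg n))

lemma sum [SeminormedRing A] {ι : Type*} {S : Finset ι} {c : ι → ℝ} {p : ℕ} {f : ι → A⟦X⟧}
    (h : ∀ i ∈ S, Majorized R (c i) p (f i)) : Majorized R (∑ i ∈ S, c i) p (∑ i ∈ S, f i) :=
  fun n => by
    rw [map_sum, Finset.sum_mul]
    exact norm_sum_le_of_le S fun i hi => h i hi n

lemma mul [SeminormedRing A] {c c' : ℝ} {p p' : ℕ} {f g : A⟦X⟧} (hf : Majorized R c p f)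
    (hg : Majorized R c' p' g) : Majorized R (c * c') (p + p') (f * g) := fun n => by
  rw [pow_add, coeff_mul, coeff_mul, Finset.mul_sum]
  refine norm_sum_le_of_le _ fun i _ => (norm_mul_le _ _).trans ?_
  rw [mul_mul_mul_comm]
  exact mul_le_mul (hf _) (hg _) (norm_nonneg _) ((norm_nonneg _).trans (hf _))

lemma one [SeminormedRing A] [NormOneClass A] : Majorized R 1 0 (1 : A⟦X⟧) := fun n => by
  rw [pow_zero, coeff_one, coeff_one]
  split_ifs <;> simp

lemma prod [SeminormedCommRing A] [NormOneClass A] {ι : Type*} {S : Finset ι} {p : ι → ℕ}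
    {f : ι → A⟦X⟧} (h : ∀ i ∈ S, Majorized R 1 (p i) (f i)) :
    Majorized R 1 (∑ i ∈ S, p i) (∏ i ∈ S, f i) := by
  induction S using Finset.induction_on with
  | empty => exact one
  | insert a S ha ih =>
    rw [Finset.sum_insert ha, Finset.prod_insert ha, ← one_mul (1 : ℝ)]
    exact (h a (Finset.mem_insert_self a S)).mul
      (ih fun i hi => h i (Finset.mem_insert_of_mem hi))

lemma derivative [SeminormedCommRing A] [NormOneClass A] {c : ℝ} {p : ℕ} {f : A⟦X⟧}
    (h : Majorized R c p f) : Majorized R (c * (p * R)) (p + 1) (d⁄dX A f) := fun n => by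
  rw [mul_assoc, ← coeff_C_mul, ← derivative_geomSeries_pow, coeff_derivative, coeff_derivative,
    ← mul_assoc]
  have hn : ‖(n + 1 : A)‖ ≤ n + 1 := by simpa using Nat.norm_cast_le (α := A) (n + 1)
  exact (norm_mul_le _ _).trans (mul_le_mul (h _) hn (norm_nonneg _) ((norm_nonneg _).trans (h _)))

lemma of_norm_coeff_le [SeminormedRing A] {c : ℝ} {f : A⟦X⟧}
    (h : ∀ n, ‖coeff n f‖ ≤ c * R ^ n) : Majorized R c 1 f := fun n => by
  rw [pow_one, geomSeries, coeff_mk]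
  exact h n

lemma of_norm_coeff_le_const [SeminormedRing A] (hR : 1 ≤ R) {c : ℝ} {f : A⟦X⟧}
    (h : ∀ n, ‖coeff n f‖ ≤ c) : Majorized R c 1 f :=
  of_norm_coeff_le fun n =>
    (h n).trans (le_mul_of_one_le_right ((norm_nonneg _).trans (h 0)) (one_le_pow₀ hR))

lemma mul_derivative_add_mul [SeminormedCommRing A] [NormOneClass A] (hR : 0 ≤ R) {c b : ℝ}
    {p H : ℕ} {W ρ f : A⟦X⟧} (hW : Majorized R 1 H W) (hρ : Majorized R (b * R) H ρ)
    (hf : Majorized R c p f) :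
    Majorized R (c * (R * (p + b))) (p + (H + 1)) (W * d⁄dX A f + ρ * f) := by
  have hadd := (hW.mul hf.derivative).add ((hρ.mul hf).mono hR le_rfl (Nat.le_succ _))
  refine hadd.mono hR (le_of_eq (by ring)) (by omega)

lemma const [SeminormedRing A] (a : A) : Majorized R ‖a‖ 0 (C a) := fun n => by
  rw [pow_zero, coeff_one, coeff_C]
  split_ifs <;> simp

lemma iterate_twistedDerivative [SeminormedCommRing A] [NormOneClass A] (hR : 0 ≤ R) {c b : ℝ}
    (hb : 0 ≤ b) {p H : ℕ} {W ρ f : Polynomial A} (hW : Majorized R 1 H (W : A⟦X⟧))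
    (hρ : Majorized R (b * R) H (ρ : A⟦X⟧)) (hf : Majorized R c p (f : A⟦X⟧)) (k : ℕ) :
    Majorized R (c * (R * (p + k * (H + 1) + b)) ^ k) (p + k * (H + 1))
      (((twistedDerivative W ρ)^[k] f : Polynomial A) : A⟦X⟧) := by
  induction k with
  | zero => simpa using hf
  | succ k ih =>
    have hc := hf.const_nonneg
    rw [Function.iterate_succ_apply', coe_twistedDerivative]
    refine (mul_derivative_add_mul hR hW hρ ih).mono hR ?_ (by rw [add_mul, one_mul, add_assoc])
    have hstep : (p : ℝ) + k * (H + 1) ≤ p + (k + 1) * (H + 1) := by linarith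
    push_cast
    rw [pow_succ (R * (p + (k + 1) * (H + 1) + b)), ← mul_assoc c]
    gcongr

end Majorized

end Majorants

section Evaluation

open PowerSeries

variable {A 𝕜 : Type*} [CommRing A] [NormedCommRing 𝕜] [Algebra A 𝕜]

/-- The power series `f` converges absolutely at `x`, with sum `v`. -/
def HasSumAt (f : A⟦X⟧) (x v : 𝕜) : Prop :=
  (Summable fun n => ‖algebraMap A 𝕜 (coeff n f) * x ^ n‖) ∧
    HasSum (fun n => algebraMap A 𝕜 (coeff n f) * x ^ n) v

lemma hasSumAt_coe (f : Polynomial A) (x : 𝕜) : HasSumAt (f : A⟦X⟧) x (Polynomial.aeval x f) := by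
  have hzero (n : ℕ) (hn : n ∉ f.support) :
      algebraMap A 𝕜 (coeff n (f : A⟦X⟧)) * x ^ n = 0 := by
    rw [Polynomial.coeff_coe, Polynomial.notMem_support_iff.1 hn, map_zero, zero_mul]
  refine ⟨summable_of_ne_finset_zero (s := f.support) fun n hn => by rw [hzero n hn, norm_zero], ?_⟩
  rw [Polynomial.aeval_def, Polynomial.eval₂_eq_sum, Polynomial.sum]
  simpa only [Polynomial.coeff_coe] using hasSum_sum_of_ne_finset_zero hzero

lemma exists_hasSumAt_of_norm_coeff_le [CompleteSpace 𝕜] [NormOneClass 𝕜] {f : A⟦X⟧} {x : 𝕜}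
    {c ρ : ℝ} (hf : ∀ n, ‖algebraMap A 𝕜 (coeff n f)‖ ≤ c * ρ ^ n) (hρ : 0 ≤ ρ)
    (hx : ρ * ‖x‖ < 1) : ∃ v, HasSumAt f x v := by
  have hsum : Summable fun n => ‖algebraMap A 𝕜 (coeff n f) * x ^ n‖ := by
    refine ((summable_geometric_of_lt_one (by positivity) hx).mul_left c).of_nonneg_of_le
      (fun _ => norm_nonneg _) fun n => ?_
    rw [mul_pow, ← mul_assoc]
    exact norm_mul_le_of_le (hf n) (norm_pow_le x n)
  exact ⟨_, hsum, hsum.of_norm.hasSum⟩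

namespace HasSumAt

variable {f g : A⟦X⟧} {x v w : 𝕜}

lemma unique (hv : HasSumAt f x v) (hw : HasSumAt f x w) : v = w := hv.2.unique hw.2

lemma add (hf : HasSumAt f x v) (hg : HasSumAt g x w) : HasSumAt (f + g) x (v + w) := by
  have hterm (n : ℕ) : algebraMap A 𝕜 (coeff n (f + g)) * x ^ n =
      algebraMap A 𝕜 (coeff n f) * x ^ n + algebraMap A 𝕜 (coeff n g) * x ^ n := by
    rw [map_add, map_add, add_mul]
  simp only [HasSumAt, hterm]
  exact ⟨(hf.1.add hg.1).of_nonneg_of_le (fun _ => norm_nonneg _) fun _ => norm_add_le _ _,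
    hf.2.add hg.2⟩

lemma one : HasSumAt (1 : A⟦X⟧) x 1 := by
  simpa using hasSumAt_coe (1 : Polynomial A) x

lemma sum {ι : Type*} {S : Finset ι} {f : ι → A⟦X⟧} {v : ι → 𝕜}
    (h : ∀ i ∈ S, HasSumAt (f i) x (v i)) : HasSumAt (∑ i ∈ S, f i) x (∑ i ∈ S, v i) := by
  induction S using Finset.induction_on with
  | empty => simpa using hasSumAt_coe (0 : Polynomial A) x
  | insert a S ha ih =>
    rw [Finset.sum_insert ha, Finset.sum_insert ha]
    exact (h a (Finset.mem_insert_self a S)).add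
      (ih fun i hi => h i (Finset.mem_insert_of_mem hi))

lemma norm_le [NormOneClass 𝕜] (h : HasSumAt f x v) {c ρ : ℝ}
    (hf : ∀ n, ‖algebraMap A 𝕜 (coeff n f)‖ ≤ c * ρ ^ n) (hρ : 0 ≤ ρ) (hx : ρ * ‖x‖ < 1) {t : ℕ}
    (ht : X ^ t ∣ f) : ‖v‖ ≤ c * (ρ * ‖x‖) ^ t / (1 - ρ * ‖x‖) := by
  have htail := (hasSum_nat_add_iff' t).2 h.2
  rw [Finset.sum_eq_zero fun n hn => by
    rw [X_pow_dvd_iff.1 ht n (Finset.mem_range.1 hn), map_zero, zero_mul], sub_zero] at htail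
  refine htail.norm_le_of_bounded ((hasSum_geometric_of_lt_one (by positivity) hx).mul_left
    (c * (ρ * ‖x‖) ^ t)) fun n => ?_
  rw [mul_assoc, ← pow_add, add_comm t, mul_pow, ← mul_assoc]
  exact norm_mul_le_of_le (hf _) (norm_pow_le x _)

variable [CompleteSpace 𝕜]

lemma mul (hf : HasSumAt f x v) (hg : HasSumAt g x w) : HasSumAt (f * g) x (v * w) := by
  have hterm (n : ℕ) : algebraMap A 𝕜 (coeff n (f * g)) * x ^ n =
      ∑ i ∈ Finset.HasAntidiagonal.antidiagonal n, algebraMap A 𝕜 (coeff i.1 f) * x ^ i.1 *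
        (algebraMap A 𝕜 (coeff i.2 g) * x ^ i.2) := by
    rw [coeff_mul, map_sum, Finset.sum_mul]
    refine Finset.sum_congr rfl fun i hi => ?_
    rw [← Finset.HasAntidiagonal.mem_antidiagonal.1 hi, map_mul]
    ring
  simp only [HasSumAt, hterm]
  have hsum := summable_norm_sum_mul_antidiagonal_of_summable_norm hf.1 hg.1
  refine ⟨hsum, ?_⟩
  rw [← hf.2.tsum_eq, ← hg.2.tsum_eq,
    tsum_mul_tsum_eq_tsum_sum_antidiagonal_of_summable_norm hf.1 hg.1]
  exact hsum.of_norm.hasSum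

lemma prod {ι : Type*} {S : Finset ι} {f : ι → A⟦X⟧} {v : ι → 𝕜}
    (h : ∀ i ∈ S, HasSumAt (f i) x (v i)) : HasSumAt (∏ i ∈ S, f i) x (∏ i ∈ S, v i) := by
  induction S using Finset.induction_on with
  | empty => exact one
  | insert a S ha ih =>
    rw [Finset.prod_insert ha, Finset.prod_insert ha]
    exact (h a (Finset.mem_insert_self a S)).mul
      (ih fun i hi => h i (Finset.mem_insert_of_mem hi))

lemma pow (h : HasSumAt f x v) (k : ℕ) : HasSumAt (f ^ k) x (v ^ k) := by
  simpa using prod (S := Finset.range k) fun _ _ => h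

end HasSumAt

end Evaluation

section LinearForms

open PowerSeries

variable {R ι : Type*} [CommRing R] {S : Finset ι} {W : Polynomial R} {ρ : ι → Polynomial R}
  {f : ι → R⟦X⟧}

lemma mul_derivative_sum_iterate_twistedDerivative_mul
    (hf : ∀ i ∈ S, W * d⁄dX R (f i) = ρ i * f i) (A : ι → Polynomial R) (k : ℕ) :
    W * d⁄dX R (∑ i ∈ S, (((twistedDerivative W (ρ i))^[k] (A i) : Polynomial R) : R⟦X⟧) * f i) =
      ∑ i ∈ S, (((twistedDerivative W (ρ i))^[k + 1] (A i) : Polynomial R) : R⟦X⟧) * f i := by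
  rw [map_sum, Finset.mul_sum]
  refine Finset.sum_congr rfl fun i hi => ?_
  rw [Derivation.leibniz, Function.iterate_succ_apply', coe_twistedDerivative, smul_eq_mul,
    smul_eq_mul]
  linear_combination (((twistedDerivative W (ρ i))^[k] (A i) : Polynomial R) : R⟦X⟧) * hf i hi

lemma X_pow_pred_dvd_derivative {g : R⟦X⟧} {t : ℕ} (h : X ^ t ∣ g) : X ^ (t - 1) ∣ d⁄dX R g := by
  rw [X_pow_dvd_iff] at h ⊢
  intro m hm
  rw [coeff_derivative, h (m + 1) (by omega), zero_mul]

lemma X_pow_sub_dvd_sum_iterate_twistedDerivative_mul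
    (hf : ∀ i ∈ S, W * d⁄dX R (f i) = ρ i * f i) {A : ι → Polynomial R} {t : ℕ}
    (h : X ^ t ∣ ∑ i ∈ S, (A i : R⟦X⟧) * f i) (k : ℕ) :
    X ^ (t - k) ∣
      ∑ i ∈ S, (((twistedDerivative W (ρ i))^[k] (A i) : Polynomial R) : R⟦X⟧) * f i := by
  induction k with
  | zero => exact h
  | succ k ih =>
    rw [← mul_derivative_sum_iterate_twistedDerivative_mul hf, ← Nat.sub_sub]
    exact (X_pow_pred_dvd_derivative ih).mul_left _

end LinearForms

section RatioBounds

open PowerSeries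

variable {r H : ℕ}

lemma majorized_rescale_rootSeries (hr : r ≠ 0) {j : ℕ} (hj : j < H) :
    Majorized ((r : ℝ) ^ 2 * H) 1 1 (rescale ((j : ℤ) + 1) (rootSeries r)) := by
  refine .of_norm_coeff_le fun n => ?_
  have hroot : ‖coeff n (rootSeries r)‖ ≤ ((r : ℝ) ^ 2) ^ n := by
    rw [Int.norm_eq_abs]
    exact_mod_cast abs_coeff_rootSeries_le hr n
  have hjH : ‖((j : ℤ) + 1) ^ n‖ ≤ (H : ℝ) ^ n := by
    rw [norm_pow, Int.norm_eq_abs]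
    gcongr
    rw [abs_of_nonneg (by positivity)]
    exact_mod_cast hj
  rw [coeff_rescale, one_mul, mul_pow, mul_comm]
  exact norm_mul_le_of_le hroot hjH

lemma majorized_ratioSeries (hr : r ≠ 0) {h : ℕ} (hh : h ≤ H) :
    Majorized ((r : ℝ) ^ 2 * H) 1 h (ratioSeries r h) := by
  simpa [ratioSeries] using Majorized.prod (p := fun _ => 1) fun j hj =>
    majorized_rescale_rootSeries hr ((Finset.mem_range.1 hj).trans_le hh)

lemma majorized_linearFactor {j : ℕ} (hj : j < H) :
    Majorized ((r : ℝ) ^ 2 * H) 1 1 (linearFactor r j : ℤ⟦X⟧) := by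
  have hjH : (j : ℝ) + 1 ≤ H := by exact_mod_cast hj
  refine .of_norm_coeff_le fun n => ?_
  rw [Polynomial.coeff_coe, linearFactor, Polynomial.coeff_add, Polynomial.coeff_one,
    Polynomial.coeff_C_mul, Polynomial.coeff_X]
  obtain rfl | rfl | hn : n = 0 ∨ n = 1 ∨ 2 ≤ n := by omega
  · simp
  · simp only [one_ne_zero, if_false, if_true, zero_add, mul_one, one_mul, pow_one,
      Int.norm_eq_abs]
    push_cast
    rw [abs_of_nonneg (by positivity)]
    gcongr
  · rw [if_neg (by omega), if_neg (by omega), mul_zero, add_zero, norm_zero]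
    positivity

lemma majorized_prod_linearFactor {s : Finset ℕ} (hs : s ⊆ Finset.range H) :
    Majorized ((r : ℝ) ^ 2 * H) 1 s.card ((∏ j ∈ s, linearFactor r j : Polynomial ℤ) : ℤ⟦X⟧) := by
  rw [← Polynomial.coeToPowerSeries.ringHom_apply, map_prod]
  simpa using Majorized.prod (p := fun _ => 1) fun j hj =>
    majorized_linearFactor (r := r) (Finset.mem_range.1 (hs hj))

lemma majorized_ratioPoly : Majorized ((r : ℝ) ^ 2 * H) 1 H (ratioPoly r H : ℤ⟦X⟧) := by
  simpa [ratioPoly] using majorized_prod_linearFactor (r := r) (Finset.Subset.refl (Finset.range H))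

lemma majorized_ratioLogDeriv {h : ℕ} (hh : h ≤ H) :
    Majorized ((r : ℝ) ^ 2 * H) (H * ((r : ℝ) ^ 2 * H)) H (ratioLogDeriv r H h : ℤ⟦X⟧) := by
  have hterm (j : ℕ) (hj : j ∈ Finset.range h) : Majorized ((r : ℝ) ^ 2 * H) ((r : ℝ) ^ 2 * H) H
      ((Polynomial.C ((r : ℤ) * (j + 1)) *
        ∏ i ∈ (Finset.range H).erase j, linearFactor r i : Polynomial ℤ) : ℤ⟦X⟧) := by
    rw [Polynomial.coe_mul, Polynomial.coe_C]
    refine ((Majorized.const _).mul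
      (majorized_prod_linearFactor (Finset.erase_subset _ _))).mono (by positivity) ?_ ?_
    · rw [mul_one, Int.norm_eq_abs]
      push_cast
      rw [abs_of_nonneg (by positivity)]
      have hjH : (j : ℝ) + 1 ≤ H := by exact_mod_cast (Finset.mem_range.1 hj).trans_le hh
      have hrr : (r : ℝ) ≤ r ^ 2 := by exact_mod_cast Nat.le_self_pow two_ne_zero r
      gcongr
    · simpa using Finset.card_le_card (Finset.erase_subset j (Finset.range H))
  rw [ratioLogDeriv, ← Polynomial.coeToPowerSeries.ringHom_apply, map_sum]
  refine (Majorized.sum hterm).mono (by positivity) ?_ le_rfl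
  rw [Finset.sum_const, Finset.card_range, nsmul_eq_mul]
  gcongr

end RatioBounds

section HermitePade

open PowerSeries

attribute [local instance] Matrix.seminormedAddCommGroup

lemma coe_ofFn_mul {R : Type*} [CommSemiring R] [DecidableEq R] {n : ℕ} (v : Fin n → R) (f : R⟦X⟧) :
    (Polynomial.ofFn n v : R⟦X⟧) * f = ∑ q, C (v q) * (X ^ (q : ℕ) * f) := by
  rw [Polynomial.ofFn_eq_sum_monomial, ← Polynomial.coeToPowerSeries.ringHom_apply, map_sum,
    Finset.sum_mul]
  refine Finset.sum_congr rfl fun q _ => ?_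
  rw [← Polynomial.C_mul_X_pow_eq_monomial, map_mul, map_pow,
    Polynomial.coeToPowerSeries.ringHom_apply, Polynomial.coeToPowerSeries.ringHom_apply,
    Polynomial.coe_C, Polynomial.coe_X, mul_assoc]

theorem exists_polynomial_X_pow_dvd_sum_mul {ι : Type*} [Fintype ι] (f : ι → ℤ⟦X⟧) {B : ℝ}
    (hB : 1 ≤ B) {T D : ℕ} (hT : 0 < T) (hTD : T < Fintype.card ι * (D + 1))
    (hf : ∀ i, ∀ n < T, ‖coeff n (f i)‖ ≤ B) :
    ∃ A : ι → Polynomial ℤ, A ≠ 0 ∧ (∀ i, (A i).natDegree ≤ D) ∧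
      (∀ i n, ‖(A i).coeff n‖ ≤
        (Fintype.card ι * (D + 1) * B) ^ ((T : ℝ) / (Fintype.card ι * (D + 1) - T))) ∧
      X ^ T ∣ ∑ i, (A i : ℤ⟦X⟧) * f i := by
  let M : Matrix (Fin T) (ι × Fin (D + 1)) ℤ := fun l p => coeff l (X ^ (p.2 : ℕ) * f p.1)
  have hM : ‖M‖ ≤ B := by
    rw [Matrix.norm_le_iff (by positivity)]
    intro l p
    change ‖coeff l (X ^ (p.2 : ℕ) * f p.1)‖ ≤ B
    rw [coeff_X_pow_mul']
    split_ifs with hp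
    · exact hf _ _ (by omega)
    · simpa using zero_le_one.trans hB
  obtain ⟨t, ht, hMt, htB⟩ := Int.Matrix.exists_ne_zero_int_vec_norm_le M (by simpa using hTD)
    (by simpa using hT)
  have htB' (p : ι × Fin (D + 1)) : ‖t p‖ ≤
      (Fintype.card ι * (D + 1) * B) ^ ((T : ℝ) / (Fintype.card ι * (D + 1) - T)) := by
    refine (norm_le_pi_norm t p).trans (htB.trans ?_)
    have hexp : (T : ℝ) ≤ Fintype.card ι * (D + 1) := by exact_mod_cast hTD.le
    simp only [Fintype.card_prod, Fintype.card_fin, Nat.cast_mul, Nat.cast_add, Nat.cast_one]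
    exact Real.rpow_le_rpow (by positivity) (by gcongr; exact max_le hB hM)
      (div_nonneg (by positivity) (sub_nonneg.2 hexp))
  refine ⟨fun i => Polynomial.ofFn (D + 1) fun q => t (i, q), fun h => ht ?_, fun i => ?_,
    fun i n => ?_, ?_⟩
  · funext p
    have hp := congrArg (Polynomial.coeff · p.2) (congrFun h p.1)
    exact (Polynomial.ofFn_coeff_eq_val_of_lt _ p.2.isLt).symm.trans hp
  · exact Nat.lt_succ_iff.1 (Polynomial.ofFn_natDegree_lt (Nat.le_add_left 1 D) _)
  · obtain hn | hn := lt_or_ge n (D + 1)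
    · rw [Polynomial.ofFn_coeff_eq_val_of_lt _ hn]
      exact htB' _
    · rw [Polynomial.ofFn_coeff_eq_zero_of_ge _ hn, norm_zero]
      positivity
  · refine X_pow_dvd_iff.2 fun l hl => ?_
    simp only [coe_ofFn_mul, map_sum, coeff_C_mul]
    have hl := congrFun hMt ⟨l, hl⟩
    simpa [Matrix.mulVec, dotProduct, Fintype.sum_prod_type, M, mul_comm] using hl

end HermitePade

section RatioEvaluation

open PowerSeries

lemma exists_pos_hasSumAt {A : Type*} [CommRing A] [Algebra A ℝ] {f : A⟦X⟧} {ρ x : ℝ}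
    (hf₀ : constantCoeff f = 1) (hf : ∀ n, ‖algebraMap A ℝ (coeff n f)‖ ≤ ρ ^ n) (hρ : 0 ≤ ρ)
    (hx : ρ * ‖x‖ < 1 / 2) : ∃ v, 0 < v ∧ HasSumAt f x v := by
  have hcoeff (n : ℕ) : ‖algebraMap A ℝ (coeff n (f - 1))‖ ≤ 1 * ρ ^ n := by
    rcases eq_or_ne n 0 with rfl | hn
    · simp [hf₀]
    · simpa [coeff_one, hn] using hf n
  obtain ⟨v, hv⟩ := exists_hasSumAt_of_norm_coeff_le hcoeff hρ (hx.trans one_half_lt_one)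
  have hdvd : X ^ 1 ∣ f - 1 := by rw [pow_one, X_dvd_iff, map_sub, hf₀, map_one, sub_self]
  have hlt : ‖v‖ < 1 := by
    refine (hv.norm_le hcoeff hρ (hx.trans one_half_lt_one) hdvd).trans_lt ?_
    rw [div_lt_one (by linarith)]
    linarith
  refine ⟨1 + v, by linarith [neg_lt_of_abs_lt hlt], ?_⟩
  simpa using HasSumAt.one.add hv

lemma hasSumAt_ratioSeries {r h H : ℕ} (hr : r ≠ 0) (hh : h ≤ H) {x : ℝ} (hx : 0 ≤ x)
    (hHx : (r : ℝ) ^ 2 * H * x < 1 / 2) :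
    HasSumAt (ratioSeries r h) x (Polynomial.aeval x (ratioPoly r h) ^ (r : ℝ)⁻¹) := by
  have hfactor (j : ℕ) (hj : j ∈ Finset.range h) :
      ∃ v, 0 < v ∧ HasSumAt (rescale ((j : ℤ) + 1) (rootSeries r)) x v := by
    have hconst : constantCoeff (rescale ((j : ℤ) + 1) (rootSeries r)) = 1 := by
      rw [← coeff_zero_eq_constantCoeff_apply, coeff_rescale, pow_zero, one_mul,
        coeff_zero_eq_constantCoeff_apply, constantCoeff_rootSeries]
    refine exists_pos_hasSumAt (ρ := (r : ℝ) ^ 2 * H) hconst (fun n => ?_) (by positivity)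
      (by rwa [Real.norm_of_nonneg hx])
    have hmaj := majorized_rescale_rootSeries hr ((Finset.mem_range.1 hj).trans_le hh) n
    simpa [geomSeries, Int.norm_eq_abs] using hmaj
  choose! v hv_pos hv using hfactor
  have hsum : HasSumAt (ratioSeries r h) x (∏ j ∈ Finset.range h, v j) := HasSumAt.prod hv
  have hpow : (∏ j ∈ Finset.range h, v j) ^ r = Polynomial.aeval x (ratioPoly r h) :=
    (ratioSeries_pow r h ▸ hsum.pow r).unique (hasSumAt_coe _ x)
  rwa [← hpow, Real.pow_rpow_inv_natCast (Finset.prod_pos hv_pos).le hr]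

end RatioEvaluation

section FactorialRoot

variable {r : ℕ} {c : ℝ}

/-- The real number `(c n!) ^ (1 / r)`, near which lies every positive integer solution `x` of
an equation `c n! = x ^ r + O (x ^ (r - 2))`. -/
noncomputable def factorialRoot (r : ℕ) (c : ℝ) (n : ℕ) : ℝ :=
  (c * n !) ^ (r : ℝ)⁻¹

lemma factorialRoot_pos (hc : 0 < c) (n : ℕ) : 0 < factorialRoot r c n :=
  Real.rpow_pos_of_pos (by positivity) _

lemma factorialRoot_pow (hr : r ≠ 0) (hc : 0 ≤ c) (n : ℕ) : factorialRoot r c n ^ r = c * n ! :=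
  Real.rpow_inv_natCast_pow (by positivity) hr

lemma factorialRoot_mono (hc : 0 ≤ c) : Monotone (factorialRoot r c) := fun m n h => by
  have hfac : (m ! : ℝ) ≤ n ! := by exact_mod_cast Nat.factorial_le h
  unfold factorialRoot
  gcongr

lemma factorial_add_eq_mul_aeval_ratioPoly (hr : r ≠ 0) {n : ℕ} (hn : n ≠ 0) (h : ℕ) :
    ((n + h)! : ℝ) =
      n ! * (n ^ h * Polynomial.aeval ((r : ℝ) ^ 2 * n)⁻¹ (ratioPoly r h)) := by
  induction h with
  | zero => simp [ratioPoly]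
  | succ h ih =>
    have hlin : n * Polynomial.aeval ((r : ℝ) ^ 2 * n)⁻¹ (linearFactor r h) = n + (h + 1) := by
      simp only [linearFactor, map_add, map_one, map_mul, Polynomial.aeval_C, Polynomial.aeval_X]
      push_cast
      field_simp
    rw [ratioPoly, Finset.prod_range_succ, ← ratioPoly, map_mul, ← add_assoc, Nat.factorial_succ]
    push_cast
    rw [ih]
    linear_combination (-(n ! : ℝ) * n ^ h *
      Polynomial.aeval ((r : ℝ) ^ 2 * n)⁻¹ (ratioPoly r h)) * hlin

lemma aeval_ratioPoly_nonneg {x : ℝ} (hx : 0 ≤ x) (h : ℕ) :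
    0 ≤ Polynomial.aeval x (ratioPoly r h) := by
  rw [ratioPoly, map_prod]
  refine Finset.prod_nonneg fun j _ => ?_
  simp only [linearFactor, map_add, map_one, map_mul, Polynomial.aeval_C, Polynomial.aeval_X]
  push_cast
  positivity

lemma factorialRoot_add (hr : r ≠ 0) (hc : 0 ≤ c) {n : ℕ} (hn : n ≠ 0) {h : ℕ} (hrh : r ∣ h) :
    factorialRoot r c (n + h) = factorialRoot r c n * n ^ (h / r) *
      Polynomial.aeval ((r : ℝ) ^ 2 * n)⁻¹ (ratioPoly r h) ^ (r : ℝ)⁻¹ := by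
  have heval := aeval_ratioPoly_nonneg (r := r) (x := ((r : ℝ) ^ 2 * n)⁻¹) (by positivity) h
  have hpow : ((n : ℝ) ^ h) ^ (r : ℝ)⁻¹ = n ^ (h / r) := by
    rw [← Nat.div_mul_cancel hrh, pow_mul, Real.pow_rpow_inv_natCast (by positivity) hr,
      Nat.mul_div_cancel _ (Nat.pos_of_ne_zero hr)]
  rw [factorialRoot, factorial_add_eq_mul_aeval_ratioPoly hr hn, ← mul_assoc,
    Real.mul_rpow (by positivity) (by positivity), Real.mul_rpow (by positivity) heval, hpow,
    factorialRoot, mul_assoc]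

lemma factorialRoot_le (hr : r ≠ 0) (hc : 1 ≤ c) {m n : ℕ} (hn : n ≠ 0) (h : n ≤ m * r) :
    factorialRoot r c n ≤ c * n ^ m := by
  have hn' : (1 : ℝ) ≤ n := by exact_mod_cast Nat.one_le_iff_ne_zero.2 hn
  rw [← pow_le_pow_iff_left₀ (factorialRoot_pos (by positivity) n).le (by positivity) hr,
    factorialRoot_pow hr (by positivity), mul_pow, ← pow_mul]
  calc c * n ! ≤ c ^ r * n ^ n := by
        gcongr
        · exact le_self_pow₀ hc hr
        · exact_mod_cast Nat.factorial_le_pow n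
    _ ≤ c ^ r * n ^ (m * r) := by gcongr

lemma div_three_pow_le_factorial (n : ℕ) : ((n : ℝ) / 3) ^ n ≤ n ! := by
  have hexp : Real.exp n ≤ 3 ^ n := by
    rw [← Real.exp_one_pow]
    gcongr
    linarith [Real.exp_one_lt_d9]
  have hfac := (Real.pow_div_factorial_le_exp (n : ℝ) (by positivity) n).trans hexp
  rw [div_le_iff₀ (by positivity)] at hfac
  rwa [div_pow, div_le_iff₀' (by positivity)]

lemma div_three_pow_le_factorialRoot (hr : r ≠ 0) (hc : 1 ≤ c) {m n : ℕ} (hn : 3 ≤ n)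
    (h : m * r ≤ n) : ((n : ℝ) / 3) ^ m ≤ factorialRoot r c n := by
  have hn' : (3 : ℝ) ≤ n := by exact_mod_cast hn
  rw [← pow_le_pow_iff_left₀ (by positivity) (factorialRoot_pos (by positivity) n).le hr,
    factorialRoot_pow hr (by positivity), ← pow_mul]
  calc ((n : ℝ) / 3) ^ (m * r) ≤ ((n : ℝ) / 3) ^ n := pow_le_pow_right₀ (by linarith) h
    _ ≤ n ! := div_three_pow_le_factorial n
    _ ≤ c * n ! := le_mul_of_one_le_left (by positivity) hc

lemma exists_int_pow_mul_aeval_inv {K : Type*} [Field K] {y : ℤ} (hy : (y : K) ≠ 0)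
    {p : Polynomial ℤ} {m : ℕ} (hp : p.natDegree ≤ m) :
    ∃ z : ℤ, (y : K) ^ m * Polynomial.aeval (y : K)⁻¹ p = z := by
  have hinv : (y : K)⁻¹ ≠ 0 := inv_ne_zero hy
  let := invertibleOfNonzero hinv
  refine ⟨(p.reflect m).eval y, ?_⟩
  have h := Polynomial.eval₂_reflect_mul_pow (algebraMap ℤ K) (y : K)⁻¹ m p hp
  rw [invOf_eq_inv, inv_inv, inv_pow] at h
  rw [Polynomial.aeval_def, ← h, mul_comm, mul_assoc, inv_mul_cancel₀ (pow_ne_zero _ hy), mul_one]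
  simp [Polynomial.eval₂_at_intCast]

end FactorialRoot

section IterateBounds

open PowerSeries

variable {r H : ℕ}

/-- The factor by which `k` iterations of the operator with `W = ratioPoly r H` and
`ρ = ratioLogDeriv r H h` enlarge the bounds for the values of polynomials and of linear forms in
the series `ratioSeries r h`, where `h ≤ H`. -/
noncomputable def iterateGrowth (r H k : ℕ) : ℝ :=
  2 * ((r : ℝ) ^ 2 * H * (k + 1) * (H + 1)) ^ k * 2 ^ ((k + 1) * (H + 1))

lemma HasSumAt.norm_le_of_majorized {f : ℤ⟦X⟧} {R c x v : ℝ} {p : ℕ} (hv : HasSumAt f x v)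
    (hf : Majorized R c p f) (hR : 0 ≤ R) (hx : 2 * R * ‖x‖ ≤ 1 / 2) {t : ℕ} (ht : X ^ t ∣ f) :
    ‖v‖ ≤ c * (2 * 2 ^ p) * (2 * R * ‖x‖) ^ t := by
  have hc := hf.const_nonneg
  have hcoeff (n : ℕ) : ‖algebraMap ℤ ℝ (coeff n f)‖ ≤ c * 2 ^ p * (2 * R) ^ n :=
    (Int.norm_cast_real _).trans_le (hf.norm_coeff_le hR n)
  refine (hv.norm_le hcoeff (by positivity) (by linarith) ht).trans ?_
  rw [div_le_iff₀ (by linarith)]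
  have hpos : 0 ≤ c * 2 ^ p * (2 * R * ‖x‖) ^ t := by positivity
  nlinarith

lemma one_le_sq_mul (hr : r ≠ 0) (hH : H ≠ 0) : (1 : ℝ) ≤ (r : ℝ) ^ 2 * H := by
  have : 1 ≤ r ^ 2 * H := Nat.one_le_iff_ne_zero.2 (by positivity)
  exact_mod_cast this

lemma majorized_iterate_ratioLogDeriv (hr : r ≠ 0) (hH : H ≠ 0) {h : ℕ} (hh : h ≤ H)
    {A : Polynomial ℤ} {a : ℝ} (hA : ∀ n, ‖A.coeff n‖ ≤ a) (k : ℕ) :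
    Majorized ((r : ℝ) ^ 2 * H) (a * ((r : ℝ) ^ 2 * H * (k + 1) * (H + 1)) ^ k) (k * (H + 1) + 1)
      (((twistedDerivative (ratioPoly r H) (ratioLogDeriv r H h))^[k] A : Polynomial ℤ) :
        ℤ⟦X⟧) := by
  have hbase : Majorized ((r : ℝ) ^ 2 * H) a 1 (A : ℤ⟦X⟧) :=
    .of_norm_coeff_le_const (one_le_sq_mul hr hH) fun n => by simpa using hA n
  have hiter := Majorized.iterate_twistedDerivative (by positivity) (Nat.cast_nonneg H)
    majorized_ratioPoly (majorized_ratioLogDeriv hh) hbase k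
  refine hiter.mono (by positivity) (le_of_eq ?_) (by omega)
  push_cast
  ring

lemma norm_aeval_iterate_ratioLogDeriv_le (hr : r ≠ 0) (hH : H ≠ 0) {h : ℕ} (hh : h ≤ H)
    {A : Polynomial ℤ} {a : ℝ} (hA : ∀ n, ‖A.coeff n‖ ≤ a) (k : ℕ) {x : ℝ} (hx : 0 ≤ x)
    (hHx : 2 * ((r : ℝ) ^ 2 * H) * x ≤ 1 / 2) :
    ‖Polynomial.aeval x
      ((twistedDerivative (ratioPoly r H) (ratioLogDeriv r H h))^[k] A)‖ ≤
        a * iterateGrowth r H k := by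
  have hmaj := (majorized_iterate_ratioLogDeriv hr hH hh hA k).mono (p' := (k + 1) * (H + 1))
    (by positivity) le_rfl (by nlinarith)
  have hbound := (hasSumAt_coe _ x).norm_le_of_majorized hmaj (by positivity) (t := 0)
    (by rwa [Real.norm_of_nonneg hx]) (by rw [pow_zero]; exact one_dvd _)
  rw [iterateGrowth]
  linarith

lemma norm_sum_aeval_iterate_mul_le {ι : Type*} [Fintype ι] (hr : r ≠ 0) (hH : H ≠ 0)
    {h : ι → ℕ} (hh : ∀ i, h i ≤ H) {A : ι → Polynomial ℤ} {a : ℝ}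
    (hA : ∀ i n, ‖(A i).coeff n‖ ≤ a) {T : ℕ} (hT : X ^ T ∣ ∑ i, (A i : ℤ⟦X⟧) * ratioSeries r (h i))
    (k : ℕ) {x : ℝ} (hx : 0 ≤ x) (hHx : 2 * ((r : ℝ) ^ 2 * H) * x ≤ 1 / 2) :
    ‖∑ i, Polynomial.aeval x
        ((twistedDerivative (ratioPoly r H) (ratioLogDeriv r H (h i)))^[k] (A i)) *
        Polynomial.aeval x (ratioPoly r (h i)) ^ (r : ℝ)⁻¹‖ ≤
      Fintype.card ι * a * iterateGrowth r H k * (2 * ((r : ℝ) ^ 2 * H) * x) ^ (T - k) := by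
  have hsum := HasSumAt.sum (S := Finset.univ) fun i _ =>
    (hasSumAt_coe ((twistedDerivative (ratioPoly r H) (ratioLogDeriv r H (h i)))^[k] (A i)) x).mul
      (hasSumAt_ratioSeries hr (hh i) hx (by linarith))
  have hmaj := Majorized.sum (S := Finset.univ) fun i _ =>
    (majorized_iterate_ratioLogDeriv hr hH (hh i) (hA i) k).mul
      ((majorized_ratioSeries hr (hh i)).mono (by positivity) le_rfl (hh i))
  have hdvd := X_pow_sub_dvd_sum_iterate_twistedDerivative_mul
    (fun i _ => ratioPoly_mul_derivative_ratioSeries hr (hh i)) hT k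
  refine (hsum.norm_le_of_majorized hmaj (by positivity)
    (by rwa [Real.norm_of_nonneg hx]) hdvd).trans (le_of_eq ?_)
  rw [Finset.sum_const, Finset.card_univ, nsmul_eq_mul, Real.norm_of_nonneg hx, iterateGrowth]
  ring

end IterateBounds

section Parameters

/-- The range of the parameters in which the linear forms are small enough to vanish: the `12`
approximating polynomials have degree at most `D`, the shifts are at most `H`, and `k` is the number
of differentiations. -/
structure IsAdmissible (r : ℕ) (c C₁ : ℝ) (H D n k : ℕ) : Prop where
  r_ne_zero : r ≠ 0
  le_H : 2 ^ 7 * r ^ 14 ≤ H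
  one_le_c : 1 ≤ c
  c_le : c ≤ H
  one_le_C₁ : 1 ≤ C₁
  C₁_le : C₁ ≤ H
  pow_le_n : H ^ 33 ≤ n
  n_le_pow : n ≤ H ^ 35
  pow_le_D : H ^ 16 ≤ D + 1
  D_le_pow : D + 1 ≤ H ^ 34
  mul_D_le : 2 * D * r ≤ n
  le_mul_D : n ≤ 4 * (D + 1) * r
  k_le : k ≤ 2 * H ^ 14

namespace IsAdmissible

variable {r H D n k : ℕ} {c C₁ : ℝ}

lemma two_pow_seven_le (h : IsAdmissible r c C₁ H D n k) : 2 ^ 7 ≤ H :=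
  (Nat.le_mul_of_pos_right _ (pow_pos (Nat.pos_of_ne_zero h.r_ne_zero) _)).trans h.le_H

lemma sq_r_le (h : IsAdmissible r c C₁ H D n k) : r ^ 2 ≤ H :=
  (Nat.pow_le_pow_right (Nat.pos_of_ne_zero h.r_ne_zero) (by norm_num)).trans
    ((Nat.le_mul_of_pos_left _ (by norm_num)).trans h.le_H)

lemma mul_le_n (h : IsAdmissible r c C₁ H D n k) : 4 * H ≤ n := by
  refine le_trans ?_ h.pow_le_n
  have hH := h.two_pow_seven_le
  calc 4 * H ≤ H * H := Nat.mul_le_mul_right _ (by omega)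
    _ = H ^ 2 := (pow_two H).symm
    _ ≤ H ^ 33 := Nat.pow_le_pow_right (by omega) (by norm_num)

lemma iterateGrowth_le (h : IsAdmissible r c C₁ H D n k) :
    iterateGrowth r H k ≤ (H : ℝ) ^ (1 + 19 * k + (k + 1) * (H + 1)) := by
  have hH : (2 ^ 7 : ℝ) ≤ H := by exact_mod_cast h.two_pow_seven_le
  have hr : (r : ℝ) ^ 2 ≤ H := by exact_mod_cast h.sq_r_le
  have hk : (k : ℝ) + 1 ≤ (H : ℝ) ^ 15 := by
    have hk' : (k : ℝ) ≤ 2 * (H : ℝ) ^ 14 := by exact_mod_cast h.k_le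
    have hone : (1 : ℝ) ≤ (H : ℝ) ^ 14 := one_le_pow₀ (by linarith)
    calc (k : ℝ) + 1 ≤ H * (H : ℝ) ^ 14 := by nlinarith
      _ = (H : ℝ) ^ 15 := by ring
  have hH1 : (H : ℝ) + 1 ≤ (H : ℝ) ^ 2 := by nlinarith
  have hbase : (r : ℝ) ^ 2 * H * (k + 1) * (H + 1) ≤ (H : ℝ) ^ 19 := calc
    (r : ℝ) ^ 2 * H * (k + 1) * (H + 1) ≤ H * H * (H : ℝ) ^ 15 * (H : ℝ) ^ 2 := by gcongr
    _ = (H : ℝ) ^ 19 := by ring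
  calc iterateGrowth r H k
      ≤ H * ((H : ℝ) ^ 19) ^ k * (H : ℝ) ^ ((k + 1) * (H + 1)) := by
        unfold iterateGrowth
        gcongr <;> linarith
    _ = (H : ℝ) ^ (1 + 19 * k + (k + 1) * (H + 1)) := by rw [← pow_mul, pow_add, pow_add, pow_one]

lemma exponent_le (h : IsAdmissible r c C₁ H D n k) :
    (2 + 34 + H + (1 + 19 * k + (k + 1) * (H + 1)) + 36 * (k * H) + 35 * (H + k + 2)) + 2 ≤
      D + 1 := by
  refine le_trans ?_ h.pow_le_D
  have hH := h.two_pow_seven_le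
  have hk := h.k_le
  have hkH : k * H ≤ 2 * H ^ 15 := by
    calc k * H ≤ 2 * H ^ 14 * H := Nat.mul_le_mul_right _ hk
      _ = 2 * H ^ 15 := by ring
  have h14 : 2 ^ 7 * H ^ 14 ≤ H ^ 15 := by
    calc 2 ^ 7 * H ^ 14 ≤ H * H ^ 14 := Nat.mul_le_mul_right _ hH
      _ = H ^ 15 := by ring
  have h15 : 2 ^ 7 * H ^ 15 ≤ H ^ 16 := by
    calc 2 ^ 7 * H ^ 15 ≤ H * H ^ 15 := Nat.mul_le_mul_right _ hH
      _ = H ^ 16 := by ring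
  have h1 : H ≤ H ^ 14 := Nat.le_self_pow (by norm_num) H
  have hexpand : (k + 1) * (H + 1) = k * H + k + H + 1 := by ring
  omega

lemma subexponential_factor_le (h : IsAdmissible r c C₁ H D n k) :
    144 * (D + 1) * 2 ^ H * iterateGrowth r H k * ((r : ℝ) ^ 2 * n) ^ (k * H) *
      (n : ℝ) ^ (H + k + 2) * (c * C₁) ≤ (H : ℝ) ^ (D + 1) := by
  have hH : (2 ^ 7 : ℝ) ≤ H := by exact_mod_cast h.two_pow_seven_le
  have hr : (r : ℝ) ^ 2 ≤ H := by exact_mod_cast h.sq_r_le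
  have hn : (n : ℝ) ≤ (H : ℝ) ^ 35 := by exact_mod_cast h.n_le_pow
  have hD : (D : ℝ) + 1 ≤ (H : ℝ) ^ 34 := by exact_mod_cast h.D_le_pow
  have hgrowth : 0 ≤ iterateGrowth r H k := by unfold iterateGrowth; positivity
  have hc := zero_le_one.trans h.one_le_c
  have hC₁ := zero_le_one.trans h.one_le_C₁
  calc _ ≤ (H : ℝ) ^ 2 * (H : ℝ) ^ 34 * (H : ℝ) ^ H *
        (H : ℝ) ^ (1 + 19 * k + (k + 1) * (H + 1)) * (H * (H : ℝ) ^ 35) ^ (k * H) *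
        ((H : ℝ) ^ 35) ^ (H + k + 2) * (H * H) := by
        gcongr
        · nlinarith
        · linarith
        · exact h.iterateGrowth_le
        · exact h.c_le
        · exact h.C₁_le
    _ = (H : ℝ) ^ ((2 + 34 + H + (1 + 19 * k + (k + 1) * (H + 1)) + 36 * (k * H) +
          35 * (H + k + 2)) + 2) := by
        rw [← pow_succ', ← pow_mul, ← pow_mul, ← pow_two]
        simp only [← pow_add]
    _ ≤ (H : ℝ) ^ (D + 1) := pow_le_pow_right₀ (by linarith) h.exponent_le

end IsAdmissible

end Parameters

lemma mul_mul_add_lt_one {P Q G I s t u v : ℝ} (hP₀ : 0 ≤ P) (hG₀ : 0 ≤ G) (hI₀ : 0 ≤ I)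
    (hs : 1 ≤ s) (ht : 1 ≤ t) (hu : 2 ≤ u) (hv : u ^ 33 ≤ v) (hst : P * (s * t) ≤ u)
    (hQ : Q ≤ u ^ 7 * v) (hG : G * v ^ 2 ≤ s * u ^ 7) (hI : I * v ^ 2 ≤ t * u) :
    P * Q * (G + I) < 1 := by
  have hPs : P * s ≤ u :=
    (mul_le_mul_of_nonneg_left (le_mul_of_one_le_right (by linarith) ht) hP₀).trans hst
  have hPt : P * t ≤ u :=
    (mul_le_mul_of_nonneg_left (le_mul_of_one_le_left (by linarith) hs) hP₀).trans hst
  have hv₀ : 0 < v := (by positivity : (0 : ℝ) < u ^ 33).trans_le hv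
  have hlt : P * Q * (G + I) * v < 1 * v := calc
    P * Q * (G + I) * v ≤ P * (u ^ 7 * v) * (G + I) * v := by gcongr
    _ = P * u ^ 7 * (G * v ^ 2) + P * u ^ 7 * (I * v ^ 2) := by ring
    _ ≤ P * u ^ 7 * (s * u ^ 7) + P * u ^ 7 * (t * u) := by gcongr
    _ = P * s * u ^ 14 + P * t * u ^ 8 := by ring
    _ ≤ u * u ^ 14 + u * u ^ 8 := by gcongr
    _ ≤ u ^ 15 + u ^ 15 := by
      rw [← pow_succ', ← pow_succ']
      gcongr <;> linarith
    _ ≤ u * u ^ 15 := by nlinarith [pow_pos (zero_lt_two.trans_le hu) 15]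
    _ = u ^ 16 := by ring
    _ < u ^ 33 := pow_lt_pow_right₀ (by linarith) (by norm_num)
    _ ≤ 1 * v := by linarith
  exact lt_of_mul_lt_mul_right hlt hv₀.le

namespace IsAdmissible

variable {r H D n k : ℕ} {c C₁ : ℝ}

lemma n_pos (h : IsAdmissible r c C₁ H D n k) : 0 < n := by
  have hH := h.two_pow_seven_le
  have hn := h.mul_le_n
  omega

lemma pow_H_le_pow_n (h : IsAdmissible r c C₁ H D n k) :
    ((H : ℝ) ^ (D + 1)) ^ 33 ≤ (n : ℝ) ^ (D + 1) := by
  rw [← pow_mul, mul_comm, pow_mul]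
  gcongr
  exact_mod_cast h.pow_le_n

lemma coefficient_factor_le (h : IsAdmissible r c C₁ H D n k) :
    (2 * ((r : ℝ) ^ 2 * H)) ^ (6 * (D + 1)) * ((r : ℝ) ^ 2 * n) ^ D * n ≤
      ((H : ℝ) ^ (D + 1)) ^ 7 * (n : ℝ) ^ (D + 1) := by
  have hH : 2 ^ 7 * (r : ℝ) ^ 14 ≤ H := by exact_mod_cast h.le_H
  have hr : (1 : ℝ) ≤ (r : ℝ) ^ 2 :=
    one_le_pow₀ (by exact_mod_cast Nat.one_le_iff_ne_zero.2 h.r_ne_zero)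
  calc (2 * ((r : ℝ) ^ 2 * H)) ^ (6 * (D + 1)) * ((r : ℝ) ^ 2 * n) ^ D * n
      = (2 * ((r : ℝ) ^ 2 * H)) ^ (6 * (D + 1)) * ((r : ℝ) ^ 2) ^ D * (n : ℝ) ^ (D + 1) := by ring
    _ ≤ (2 * ((r : ℝ) ^ 2 * H)) ^ (6 * (D + 1)) * ((r : ℝ) ^ 2) ^ (D + 1) *
        (n : ℝ) ^ (D + 1) := by
        gcongr
        exact D.le_succ
    _ = ((2 ^ 6 * (r : ℝ) ^ 14) * (H : ℝ) ^ 6) ^ (D + 1) * (n : ℝ) ^ (D + 1) := by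
        rw [pow_mul, ← mul_pow]
        ring
    _ ≤ (H * (H : ℝ) ^ 6) ^ (D + 1) * (n : ℝ) ^ (D + 1) := by
        gcongr
        nlinarith [pow_nonneg (Nat.cast_nonneg (α := ℝ) r) 14]
    _ = ((H : ℝ) ^ (D + 1)) ^ 7 * (n : ℝ) ^ (D + 1) := by ring

lemma factorialRoot_mul_pow_le (h : IsAdmissible r c C₁ H D n k) :
    factorialRoot r c n * (2 * (H / n)) ^ (6 * (D + 1) - k) * ((n : ℝ) ^ (D + 1)) ^ 2 ≤
      c * n ^ k * ((H : ℝ) ^ (D + 1)) ^ 7 := by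
  have hn : (0 : ℝ) < n := by exact_mod_cast h.n_pos
  have hH : (2 ^ 7 : ℝ) ≤ H := by exact_mod_cast h.two_pow_seven_le
  have hc := zero_le_one.trans h.one_le_c
  have hk : k ≤ 6 * (D + 1) := by
    have hle := h.exponent_le
    omega
  have hroot := factorialRoot_le h.r_ne_zero h.one_le_c h.n_pos.ne' h.le_mul_D
  calc factorialRoot r c n * (2 * (H / n)) ^ (6 * (D + 1) - k) * ((n : ℝ) ^ (D + 1)) ^ 2
      ≤ c * n ^ (4 * (D + 1)) * (2 * (H / n)) ^ (6 * (D + 1) - k) * ((n : ℝ) ^ (D + 1)) ^ 2 := by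
        gcongr
    _ = c * ((2 * (H / n)) ^ (6 * (D + 1) - k) * (n : ℝ) ^ (6 * (D + 1))) := by ring
    _ = c * ((2 * (H : ℝ)) ^ (6 * (D + 1) - k) * n ^ k) := by
        nth_rewrite 2 [← Nat.sub_add_cancel hk]
        rw [pow_add, ← mul_assoc ((2 * ((H : ℝ) / n)) ^ _), ← mul_pow, mul_assoc 2,
          div_mul_cancel₀ _ hn.ne']
    _ ≤ c * ((2 * (H : ℝ)) ^ (6 * (D + 1)) * n ^ k) := by
        gcongr
        · linarith
        · exact Nat.sub_le _ _
    _ = c * ((2 ^ 6 * (H : ℝ) ^ 6) ^ (D + 1) * n ^ k) := by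
        rw [pow_mul, mul_pow]
    _ ≤ c * ((H * (H : ℝ) ^ 6) ^ (D + 1) * n ^ k) := by
        gcongr
        linarith
    _ = c * n ^ k * ((H : ℝ) ^ (D + 1)) ^ 7 := by ring

lemma pow_n_le_factorialRoot (h : IsAdmissible r c C₁ H D n k) :
    ((n : ℝ) ^ (D + 1)) ^ 2 ≤ factorialRoot r c n * (n ^ 2 * (H : ℝ) ^ (D + 1)) := by
  have hH := h.two_pow_seven_le
  have hn := h.mul_le_n
  have hroot := div_three_pow_le_factorialRoot h.r_ne_zero h.one_le_c (by omega) h.mul_D_le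
  have hpos := factorialRoot_pos (r := r) (zero_lt_one.trans_le h.one_le_c) n
  have hnine : (9 : ℝ) ^ D ≤ (H : ℝ) ^ (D + 1) := calc
    (9 : ℝ) ^ D ≤ (H : ℝ) ^ D := by
      gcongr
      exact_mod_cast (by omega : 9 ≤ H)
    _ ≤ (H : ℝ) ^ (D + 1) := pow_le_pow_right₀ (by exact_mod_cast (by omega : 1 ≤ H)) D.le_succ
  calc ((n : ℝ) ^ (D + 1)) ^ 2 = ((n : ℝ) / 3) ^ (2 * D) * (n ^ 2 * 9 ^ D) := by
        rw [div_pow, pow_mul 3]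
        norm_num
        field_simp
        ring
    _ ≤ factorialRoot r c n * (n ^ 2 * (H : ℝ) ^ (D + 1)) := by gcongr

theorem error_lt_one (h : IsAdmissible r c C₁ H D n k) {a : ℝ}
    (ha : a = 12 * (D + 1) * (2 ^ H * (2 * ((r : ℝ) ^ 2 * H)) ^ (6 * (D + 1)))) :
    ((r : ℝ) ^ 2 * n) ^ (D + k * H) * n ^ H *
      (factorialRoot r c n *
          (12 * a * iterateGrowth r H k * (2 * (H / n)) ^ (6 * (D + 1) - k)) +
        12 * (a * iterateGrowth r H k * (C₁ / factorialRoot r c n))) < 1 := by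
  have hc := h.one_le_c
  have hC₁ := h.one_le_C₁
  have hn : (1 : ℝ) ≤ n := by exact_mod_cast h.n_pos
  have hg := factorialRoot_pos (r := r) (zero_lt_one.trans_le hc) n
  have hgrowth : 0 ≤ iterateGrowth r H k := by unfold iterateGrowth; positivity
  have hu : (2 : ℝ) ≤ (H : ℝ) ^ (D + 1) := by
    have hH : (2 : ℝ) ≤ H := by exact_mod_cast le_trans (by norm_num) h.two_pow_seven_le
    exact hH.trans (le_self_pow₀ (by linarith) D.succ_ne_zero)
  set P := 144 * (D + 1) * 2 ^ H * iterateGrowth r H k * ((r : ℝ) ^ 2 * n) ^ (k * H) * n ^ H with hP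
  have hPn : P * (c * n ^ k * (n ^ 2 * C₁)) ≤ (H : ℝ) ^ (D + 1) := by
    refine le_trans (le_of_eq ?_) h.subexponential_factor_le
    rw [hP]
    ring
  have hQ := (le_mul_of_one_le_right (by positivity) hn).trans h.coefficient_factor_le
  have hint : C₁ / factorialRoot r c n * ((n : ℝ) ^ (D + 1)) ^ 2 ≤
      n ^ 2 * C₁ * (H : ℝ) ^ (D + 1) := by
    rw [div_mul_eq_mul_div, div_le_iff₀ hg]
    linarith [mul_le_mul_of_nonneg_left h.pow_n_le_factorialRoot (zero_le_one.trans hC₁)]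
  refine lt_of_eq_of_lt ?_ (mul_mul_add_lt_one (P := P) (by positivity) (by positivity)
    (by positivity) (one_le_mul_of_one_le_of_one_le hc (one_le_pow₀ hn))
    (one_le_mul_of_one_le_of_one_le (one_le_pow₀ hn) hC₁) hu h.pow_H_le_pow_n hPn hQ
    h.factorialRoot_mul_pow_le hint)
  rw [hP, ha]
  ring

end IsAdmissible

section Vanishing

lemma sum_mul_eq_zero_of_int_of_norm_le {ι : Type*} [Fintype ι] {e v θ : ι → ℝ} {M g E ε δ : ℝ}
    (hM : 0 < M) (hint : ∀ i, ∃ z : ℤ, M * (e i * v i) = z) (he : ∀ i, ‖e i‖ ≤ E)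
    (hθ : ‖∑ i, e i * θ i‖ ≤ ε) (hg : 0 ≤ g) (hv : ∀ i, ‖v i - g * θ i‖ ≤ δ)
    (hlt : M * (g * ε + Fintype.card ι * (E * δ)) < 1) : ∑ i, e i * v i = 0 := by
  choose z hz using hint
  have hsplit : ∑ i, e i * v i = g * ∑ i, e i * θ i + ∑ i, e i * (v i - g * θ i) := by
    rw [Finset.mul_sum, ← Finset.sum_add_distrib]
    exact Finset.sum_congr rfl fun i _ => by ring
  have herr : ‖∑ i, e i * (v i - g * θ i)‖ ≤ Fintype.card ι * (E * δ) := by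
    rw [← nsmul_eq_mul, ← Finset.card_univ]
    refine norm_sum_le_of_le _ (fun i _ => ?_) |>.trans_eq (Finset.sum_const _)
    rw [norm_mul]
    exact mul_le_mul (he i) (hv i) (norm_nonneg _) ((norm_nonneg _).trans (he i))
  have hsum : M * ∑ i, e i * v i = (∑ i, z i : ℤ) := by
    rw [Finset.mul_sum, Int.cast_sum]
    exact Finset.sum_congr rfl fun i _ => hz i
  have hnorm : ‖M * ∑ i, e i * v i‖ < 1 := by
    refine lt_of_le_of_lt ?_ hlt
    rw [norm_mul, Real.norm_of_nonneg hM.le, hsplit]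
    gcongr
    refine (norm_add_le _ _).trans (add_le_add ?_ herr)
    rw [norm_mul, Real.norm_of_nonneg hg]
    gcongr
  rw [hsum, Real.norm_eq_abs, ← Int.cast_abs] at hnorm
  have hzero : ∑ i, z i = 0 := Int.abs_lt_one_iff.1 (by exact_mod_cast hnorm)
  rw [hzero, Int.cast_zero] at hsum
  exact (mul_eq_zero.1 hsum).resolve_left hM.ne'

lemma natDegree_linearFactor_le (r j : ℕ) : (linearFactor r j).natDegree ≤ 1 := by
  rw [linearFactor, add_comm, ← Polynomial.C_1]
  exact Polynomial.natDegree_linear_le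

lemma natDegree_prod_linearFactor_le (r : ℕ) (S : Finset ℕ) :
    (∏ j ∈ S, linearFactor r j).natDegree ≤ S.card :=
  (Polynomial.natDegree_prod_le _ _).trans <|
    (Finset.sum_le_card_nsmul _ _ 1 fun j _ => natDegree_linearFactor_le r j).trans (by simp)

lemma natDegree_ratioPoly_le (r h : ℕ) : (ratioPoly r h).natDegree ≤ h :=
  (natDegree_prod_linearFactor_le r _).trans_eq (Finset.card_range h)

lemma natDegree_ratioLogDeriv_le (r H h : ℕ) : (ratioLogDeriv r H h).natDegree ≤ H :=
  Polynomial.natDegree_sum_le_of_forall_le _ _ fun j _ =>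
    (Polynomial.natDegree_C_mul_le _ _).trans <| (natDegree_prod_linearFactor_le r _).trans <|
      (Finset.card_le_card (Finset.erase_subset j _)).trans_eq (Finset.card_range H)

variable {r H : ℕ} {c C₁ : ℝ}

lemma norm_div_pow_sub_le (hr : r ≠ 0) (hc : 0 < c) (hC₁ : 0 ≤ C₁) {n h : ℕ} (hn : n ≠ 0)
    (hrh : r ∣ h) {Z : ℝ}
    (hZ : ‖Z - factorialRoot r c (n + h)‖ ≤ C₁ / factorialRoot r c (n + h)) :
    ‖Z / n ^ (h / r) - factorialRoot r c n *
      Polynomial.aeval ((r : ℝ) ^ 2 * n)⁻¹ (ratioPoly r h) ^ (r : ℝ)⁻¹‖ ≤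
        C₁ / factorialRoot r c n := by
  have hn' : (1 : ℝ) ≤ n := by exact_mod_cast Nat.one_le_iff_ne_zero.2 hn
  have hg := factorialRoot_pos (r := r) hc n
  have hsub : Z / n ^ (h / r) - factorialRoot r c n *
      Polynomial.aeval ((r : ℝ) ^ 2 * n)⁻¹ (ratioPoly r h) ^ (r : ℝ)⁻¹ =
        (Z - factorialRoot r c (n + h)) / n ^ (h / r) := by
    rw [factorialRoot_add hr hc.le hn hrh]
    field_simp
  rw [hsub, norm_div, norm_pow, Real.norm_natCast]
  calc ‖Z - factorialRoot r c (n + h)‖ / (n : ℝ) ^ (h / r)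
      ≤ ‖Z - factorialRoot r c (n + h)‖ := div_le_self (norm_nonneg _) (one_le_pow₀ hn')
    _ ≤ C₁ / factorialRoot r c (n + h) := hZ
    _ ≤ C₁ / factorialRoot r c n :=
        div_le_div_of_nonneg_left hC₁ hg (factorialRoot_mono hc.le (n.le_add_right h))

lemma exists_int_pow_mul_aeval_iterate_mul_div (hr : r ≠ 0) {n h m D : ℕ} (hn : n ≠ 0) (hm : m ≤ H)
    {A : Polynomial ℤ} (hA : A.natDegree ≤ D) (k : ℕ) (Z : ℤ) :
    ∃ z : ℤ, ((r : ℝ) ^ 2 * n) ^ (D + k * H) * n ^ H *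
      (Polynomial.aeval ((r : ℝ) ^ 2 * n)⁻¹
        ((twistedDerivative (ratioPoly r H) (ratioLogDeriv r H h))^[k] A) * (Z / n ^ m)) = z := by
  obtain ⟨z, hz⟩ := exists_int_pow_mul_aeval_inv (K := ℝ) (y := (r : ℤ) ^ 2 * n)
    (by push_cast; positivity) (natDegree_iterate_twistedDerivative_le (natDegree_ratioPoly_le r H)
      (natDegree_ratioLogDeriv_le r H h) hA k)
  refine ⟨z * (n ^ (H - m) * Z), ?_⟩
  push_cast at hz ⊢
  rw [← hz, ← pow_sub_mul_pow (n : ℝ) hm]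
  generalize Polynomial.aeval (R := ℤ) ((r : ℝ) ^ 2 * n)⁻¹ _ = e
  field_simp

lemma exists_polynomial_X_pow_dvd_sum_mul_ratioSeries (hr : r ≠ 0) (hH : H ≠ 0) {h : Fin 12 → ℕ}
    (hh : ∀ i, h i ≤ H) (D : ℕ) :
    ∃ A : Fin 12 → Polynomial ℤ, A ≠ 0 ∧ (∀ i, (A i).natDegree ≤ D) ∧
      (∀ i n, ‖(A i).coeff n‖ ≤
        12 * (D + 1) * (2 ^ H * (2 * ((r : ℝ) ^ 2 * H)) ^ (6 * (D + 1)))) ∧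
      PowerSeries.X ^ (6 * (D + 1)) ∣ ∑ i, (A i : PowerSeries ℤ) * ratioSeries r (h i) := by
  have hrH := one_le_sq_mul hr hH
  have hB : 1 ≤ (2 : ℝ) ^ H * (2 * ((r : ℝ) ^ 2 * H)) ^ (6 * (D + 1)) :=
    one_le_mul_of_one_le_of_one_le (one_le_pow₀ one_le_two) (one_le_pow₀ (by linarith))
  obtain ⟨A, hA, hdeg, hcoeff, hdvd⟩ := exists_polynomial_X_pow_dvd_sum_mul
    (fun i => ratioSeries r (h i)) hB (T := 6 * (D + 1)) (D := D) (by omega)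
    (by rw [Fintype.card_fin]; omega) fun i n hn => by
      refine ((majorized_ratioSeries hr (hh i)).norm_coeff_le (by positivity) n).trans ?_
      rw [one_mul]
      exact mul_le_mul (pow_le_pow_right₀ one_le_two (hh i))
        (pow_le_pow_right₀ (by linarith) hn.le) (by positivity) (by positivity)
  have hexp : ((6 * (D + 1) : ℕ) : ℝ) / (12 * (D + 1) - (6 * (D + 1) : ℕ)) = 1 := by
    rw [div_eq_one_iff_eq] <;> push_cast <;> nlinarith
  simp only [Fintype.card_fin, Nat.cast_ofNat, hexp, Real.rpow_one] at hcoeff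
  exact ⟨A, hA, hdeg, hcoeff, hdvd⟩

theorem IsAdmissible.sum_aeval_iterate_mul_eq_zero {D n k : ℕ} (hp : IsAdmissible r c C₁ H D n k)
    {h : Fin 12 → ℕ} (hh : ∀ i, h i ≤ H) (hrh : ∀ i, r ∣ h i) {A : Fin 12 → Polynomial ℤ}
    (hdeg : ∀ i, (A i).natDegree ≤ D)
    (hA : ∀ i m, ‖(A i).coeff m‖ ≤
      12 * (D + 1) * (2 ^ H * (2 * ((r : ℝ) ^ 2 * H)) ^ (6 * (D + 1))))
    (hT : PowerSeries.X ^ (6 * (D + 1)) ∣ ∑ i, (A i : PowerSeries ℤ) * ratioSeries r (h i))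
    {Z : Fin 12 → ℤ}
    (hZ : ∀ i, ‖Z i - factorialRoot r c (n + h i)‖ ≤ C₁ / factorialRoot r c (n + h i)) :
    ∑ i, Polynomial.aeval ((r : ℝ) ^ 2 * n)⁻¹
      ((twistedDerivative (ratioPoly r H) (ratioLogDeriv r H (h i)))^[k] (A i)) *
        (Z i / n ^ (h i / r)) = 0 := by
  have hr := hp.r_ne_zero
  have hn := hp.n_pos
  have hc : 0 < c := one_pos.trans_le hp.one_le_c
  have hH : H ≠ 0 := by have := hp.two_pow_seven_le; omega
  have hr' : (r : ℝ) ≠ 0 := Nat.cast_ne_zero.2 hr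
  have hx : 2 * ((r : ℝ) ^ 2 * H) * ((r : ℝ) ^ 2 * n)⁻¹ = 2 * (H / n) := by field_simp
  have hHx : 2 * ((r : ℝ) ^ 2 * H) * ((r : ℝ) ^ 2 * n)⁻¹ ≤ 1 / 2 := by
    have hHn : (4 : ℝ) * H ≤ n := by exact_mod_cast hp.mul_le_n
    rw [hx, mul_div_assoc', div_le_div_iff₀ (by positivity) two_pos]
    linarith
  have hform := norm_sum_aeval_iterate_mul_le hr hH hh hA hT k (by positivity) hHx
  rw [hx] at hform
  exact sum_mul_eq_zero_of_int_of_norm_le (by positivity)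
    (fun i => exists_int_pow_mul_aeval_iterate_mul_div hr hn.ne'
      ((Nat.div_le_self _ _).trans (hh i)) (hdeg i) k (Z i))
    (fun i => norm_aeval_iterate_ratioLogDeriv_le hr hH (hh i) (hA i) k (by positivity) hHx)
    hform (factorialRoot_pos hc n).le
    (fun i => norm_div_pow_sub_le hr hc (zero_le_one.trans hp.one_le_C₁) hn.ne' (hrh i) (hZ i))
    (by simpa using hp.error_lt_one rfl)

end Vanishing

section FixedShifts

variable {r H N : ℕ} {c C₁ : ℝ}

/-- A positive integer approximates `(c n!) ^ (1 / r)` with error at most `C₁ (c n!) ^ (-1 / r)`.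
The solutions `n` of `s n! = P(x)` are studied only through this property. -/
def HasNearbyInteger (r : ℕ) (c C₁ : ℝ) (n : ℕ) : Prop :=
  ∃ Z : ℤ, 0 < Z ∧ ‖Z - factorialRoot r c n‖ ≤ C₁ / factorialRoot r c n

lemma isAdmissible_div (hr : r ≠ 0) (hH : 2 ^ 7 * r ^ 14 ≤ H) (hc : 1 ≤ c) (hcH : c ≤ H)
    (hC₁ : 1 ≤ C₁) (hC₁H : C₁ ≤ H) (hHN : H ^ 33 ≤ N) (hNH : N ≤ H ^ 34) {n k : ℕ}
    (hn : n ∈ Finset.Ico N (2 * N)) (hk : k ≤ 2 * H ^ 14) :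
    IsAdmissible r c C₁ H (N / (2 * r)) n k := by
  obtain ⟨hNn, hnN⟩ := Finset.mem_Ico.1 hn
  have hr1 : 1 ≤ r ^ 14 := Nat.one_le_pow _ _ (Nat.pos_of_ne_zero hr)
  have hrr : r ≤ r ^ 14 := Nat.le_self_pow (by norm_num) r
  have hlt : N < 2 * r * (N / (2 * r) + 1) := Nat.lt_mul_div_succ N (by omega)
  have hle : 2 * r * (N / (2 * r)) ≤ N := Nat.mul_div_le N (2 * r)
  refine ⟨hr, hH, hc, hcH, hC₁, hC₁H, hHN.trans hNn, ?_, ?_, ?_, by linarith, by linarith, hk⟩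
  · calc n ≤ 2 * H ^ 34 := by omega
      _ ≤ H * H ^ 34 := Nat.mul_le_mul_right _ (by omega)
      _ = H ^ 35 := by ring
  · by_contra! hD
    have : 2 * r * (N / (2 * r) + 1) ≤ H ^ 33 := calc
      2 * r * (N / (2 * r) + 1) ≤ H * H ^ 16 := Nat.mul_le_mul (by omega) hD.le
      _ = H ^ 17 := by ring
      _ ≤ H ^ 33 := Nat.pow_le_pow_right (by omega) (by norm_num)
    omega
  · have : N / (2 * r) < N := Nat.div_lt_self (by omega) (by omega)
    omega

lemma eval_map_ratioPoly_pos (r h : ℕ) {x : ℝ} (hx : 0 ≤ x) :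
    0 < ((ratioPoly r h).map (Int.castRingHom ℝ)).eval x := by
  rw [ratioPoly, Polynomial.map_prod, Polynomial.eval_prod]
  refine Finset.prod_pos fun j _ => ?_
  rw [eval_linearFactor]
  positivity

lemma injective_inv_mul_natCast {K : Type*} [Field K] [CharZero K] {y : K} (hy : y ≠ 0) :
    Function.Injective fun n : ℕ => (y * n)⁻¹ := fun _ _ hmn =>
  Nat.cast_injective (mul_left_cancel₀ hy (inv_injective hmn))

lemma twelve_mul_add_lt_mul {D s : ℕ} (hD : D ≤ N) (hH : 2 ^ 7 ≤ H) (hHN : H ^ 33 ≤ N)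
    (hs : N ≤ s * H ^ 13) : 12 * (D + 12 * H) < s * (H ^ 14 + 1) := by
  have hHN' : H * H ≤ N := sq H ▸ (Nat.pow_le_pow_right (by omega) (by norm_num)).trans hHN
  calc 12 * (D + 12 * H) ≤ 12 * N + 2 * (H * H) := by nlinarith
    _ < N * H := by nlinarith
    _ ≤ s * H ^ 13 * H := Nat.mul_le_mul_right H hs
    _ ≤ s * (H ^ 14 + 1) := by
      rw [mul_assoc, ← pow_succ]
      exact Nat.mul_le_mul_left s (Nat.le_succ _)

/-- Otherwise the linear forms with polynomial coefficients that vanish to high order at `0`, and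
their derivatives, would vanish at all `n ∈ S`, contradicting the zero estimate. -/
theorem card_mul_pow_lt_of_hasNearbyInteger (hr : 2 ≤ r) (hH : 2 ^ 7 * r ^ 14 ≤ H)
    (hc : 1 ≤ c) (hcH : c ≤ H) (hC₁ : 1 ≤ C₁) (hC₁H : C₁ ≤ H) (hHN : H ^ 33 ≤ N) (hNH : N ≤ H ^ 34)
    {h : Fin 12 → ℕ} (hinj : Function.Injective h) (hh : ∀ i, h i ≤ H) (hrh : ∀ i, r ∣ h i)
    {S : Finset ℕ} (hSN : S ⊆ Finset.Ico N (2 * N))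
    (hS : ∀ n ∈ S, ∀ i, HasNearbyInteger r c C₁ (n + h i)) : S.card * H ^ 13 < N := by
  by_contra! hcard
  have hr0 : r ≠ 0 := by omega
  have hH0 : 2 ^ 7 ≤ H := (Nat.le_mul_of_pos_right _ (by positivity)).trans hH
  have hn0 (n : ℕ) (hn : n ∈ S) : n ≠ 0 := by
    have := Finset.mem_Ico.1 (hSN hn)
    omega
  have hzeros := twelve_mul_add_lt_mul (Nat.div_le_self N (2 * r)) hH0 hHN hcard
  choose! Z hZpos hZ using hS
  obtain ⟨A, hA, hdeg, hcoeff, hdvd⟩ :=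
    exists_polynomial_X_pow_dvd_sum_mul_ratioSeries hr0 (by omega) hh (N / (2 * r))
  have hA' : (fun i => (A i).map (Int.castRingHom ℝ)) ≠ 0 := fun h0 => hA <| funext fun i =>
    (Polynomial.map_eq_zero_iff Int.cast_injective).1 (congrFun h0 i)
  obtain ⟨n, hn, k, hk, hne⟩ := exists_sum_iterate_eval_mul_ne_zero
    (fun i j hij => noRationalSolution_ratioLogDeriv_sub hr (hinj.ne hij) (hh i) (hh j)) hA'
    (Polynomial.natDegree_map_le.trans (natDegree_ratioPoly_le r H))
    (fun i => Polynomial.natDegree_map_le.trans (natDegree_ratioLogDeriv_le r H (h i)))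
    (fun i => Polynomial.natDegree_map_le.trans (hdeg i))
    (injective_inv_mul_natCast (K := ℝ) (y := (r : ℝ) ^ 2) (by positivity)).injOn
    (fun n _ => (eval_map_ratioPoly_pos r H (by positivity)).ne')
    (v := fun n i => Z n i / (n : ℝ) ^ (h i / r))
    (fun n hn i => div_ne_zero (Int.cast_ne_zero.2 (hZpos n hn i).ne')
      (pow_ne_zero _ (Nat.cast_ne_zero.2 (hn0 n hn))))
    (K := H ^ 14) (S := S) (by simpa using hzeros)
  · have hk' : k ≤ 2 * H ^ 14 := by
      have := Nat.le_self_pow (n := 14) (by norm_num) H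
      rw [Fintype.card_fin] at hk
      omega
    refine hne (Eq.trans (Finset.sum_congr rfl fun i _ => ?_)
      ((isAdmissible_div hr0 hH hc hcH hC₁ hC₁H hHN hNH (hSN hn) hk').sum_aeval_iterate_mul_eq_zero
        hh hrh hdeg hcoeff hdvd (hZ n hn)))
    rw [← map_iterate_twistedDerivative, ← algebraMap_int_eq, Polynomial.eval_map_algebraMap]

end FixedShifts

section CompletingThePower

open Polynomial

lemma coeff_linear_pow {R : Type*} [CommSemiring R] (a b : R) (r i : ℕ) :
    ((C a * X + C b) ^ r).coeff i = b ^ (r - i) * r.choose i * a ^ i := by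
  have hcomp : (C a * X + C b) ^ r = ((X + C b) ^ r).comp (C a * X) := by simp
  rw [hcomp, comp_C_mul_X_coeff, coeff_X_add_C_pow]

lemma natDegree_mul_sub_linear_pow_le {R : Type*} [CommRing R] {P : R[X]} {r : ℕ} (hr : 2 ≤ r)
    (hP : P.natDegree ≤ r) :
    (C (r ^ r * P.coeff r ^ (r - 1)) * P -
      (C (r * P.coeff r) * X + C (P.coeff (r - 1))) ^ r).natDegree ≤ r - 2 := by
  obtain ⟨m, rfl⟩ := Nat.exists_eq_add_of_le' hr
  refine natDegree_le_iff_coeff_eq_zero.2 fun i hi => ?_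
  rw [coeff_sub, coeff_C_mul, coeff_linear_pow]
  obtain rfl | rfl | hi : i = m + 1 ∨ i = m + 2 ∨ m + 2 < i := by omega
  · have hchoose : (m + 2).choose (m + 1) = m + 2 := Nat.choose_succ_self_right (m + 1)
    simp only [hchoose, Nat.add_sub_add_left, Nat.add_one_sub_one]
    ring
  · simp only [Nat.choose_self, Nat.sub_self, Nat.add_one_sub_one, mul_pow]
    ring
  · rw [coeff_eq_zero_of_natDegree_lt (hP.trans_lt hi), Nat.choose_eq_zero_of_lt hi]
    simp

lemma exists_norm_eval_le {R : Type*} [SeminormedCommRing R] [NormOneClass R] {Q : R[X]} {m : ℕ}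
    (hQ : Q.natDegree ≤ m) : ∃ B : ℝ, 0 ≤ B ∧ ∀ x : R, ‖Q.eval x‖ ≤ B * (1 + ‖x‖) ^ m := by
  refine ⟨∑ i ∈ Finset.range (m + 1), ‖Q.coeff i‖, by positivity, fun x => ?_⟩
  rw [eval_eq_sum_range' (Nat.lt_succ_iff.2 hQ), Finset.sum_mul]
  refine norm_sum_le_of_le _ fun i hi => (norm_mul_le _ _).trans ?_
  have hx : 1 ≤ 1 + ‖x‖ := le_add_of_nonneg_right (norm_nonneg x)
  gcongr
  calc ‖x ^ i‖ ≤ ‖x‖ ^ i := norm_pow_le x i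
    _ ≤ (1 + ‖x‖) ^ i := by gcongr; linarith
    _ ≤ (1 + ‖x‖) ^ m := pow_le_pow_right₀ hx (Nat.lt_succ_iff.1 (Finset.mem_range.1 hi))

lemma exists_norm_pow_sub_mul_eval_le {P : ℤ[X]} (hP : 2 ≤ P.natDegree) :
    ∃ c : ℤ, c ≠ 0 ∧ ∃ B : ℝ, 0 ≤ B ∧ ∀ x : ℤ, ∃ y : ℤ,
      ‖y ^ P.natDegree - c * P.eval x‖ ≤ B * (1 + ‖y‖) ^ (P.natDegree - 2) := by
  have hdeg := natDegree_mul_sub_linear_pow_le hP (le_refl P.natDegree)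
  obtain ⟨B, hB, hQ⟩ := exists_norm_eval_le hdeg
  have ha : P.coeff P.natDegree ≠ 0 := leadingCoeff_ne_zero.2 (ne_zero_of_natDegree_gt hP)
  generalize P.coeff P.natDegree = a at ha hQ
  generalize P.coeff (P.natDegree - 1) = b at hQ
  generalize P.natDegree = r at hP hQ ⊢
  have hr : (r : ℤ) ≠ 0 := by positivity
  refine ⟨r ^ r * a ^ (r - 1), mul_ne_zero (pow_ne_zero _ hr) (pow_ne_zero _ ha),
    B * (1 + ‖b‖) ^ (r - 2), by positivity, fun x => ⟨r * a * x + b, ?_⟩⟩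
  have hx : ‖x‖ ≤ ‖r * a * x + b‖ + ‖b‖ := calc
    ‖x‖ ≤ ‖r * a * x‖ := by
      have hra : 1 ≤ ‖r * a‖ := by
        rw [Int.norm_eq_abs]
        exact_mod_cast Int.one_le_abs (mul_ne_zero hr ha)
      rw [norm_mul]
      exact le_mul_of_one_le_left (norm_nonneg x) hra
    _ ≤ ‖r * a * x + b‖ + ‖b‖ := by simpa using norm_sub_le (r * a * x + b) b
  have hxy : 1 + ‖x‖ ≤ (1 + ‖b‖) * (1 + ‖r * a * x + b‖) := by
    nlinarith [norm_nonneg b, norm_nonneg (r * a * x + b)]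
  have hQx := hQ x
  simp only [eval_sub, eval_mul, eval_C, eval_pow, eval_add, eval_X] at hQx
  rw [norm_sub_rev, mul_assoc B, ← mul_pow]
  exact hQx.trans (by gcongr)

lemma abs_sub_mul_pow_le {x y : ℝ} (hx : 0 ≤ x) (hy : 0 ≤ y) (r : ℕ) :
    |x - y| * x ^ r ≤ |x ^ (r + 1) - y ^ (r + 1)| := by
  rw [← Commute.geom_sum₂_mul (Commute.all x y), abs_mul, mul_comm]
  gcongr
  have h := Finset.single_le_sum (f := fun i => x ^ i * y ^ (r - i)) (fun i _ => by positivity)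
    (Finset.self_mem_range_succ r)
  simpa using h.trans (le_abs_self _)

lemma abs_sub_le_div_of_abs_pow_sub_le {x y B : ℝ} (hx : 1 ≤ x) (hy : 0 < y) {r : ℕ} (hr : 2 ≤ r)
    (h : |x ^ r - y ^ r| ≤ B * x ^ (r - 2)) : |x - y| ≤ B * (1 + B) / y := by
  obtain ⟨m, rfl⟩ := Nat.exists_eq_add_of_le' hr
  have hx0 : 0 < x := one_pos.trans_le hx
  have hxy : |x - y| * x ≤ B := by
    have := (abs_sub_mul_pow_le hx0.le hy.le (m + 1)).trans h
    rw [Nat.add_sub_cancel, pow_succ', ← mul_assoc] at this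
    exact le_of_mul_le_mul_right this (by positivity)
  have hB : |x - y| ≤ B := (le_mul_of_one_le_right (abs_nonneg _) hx).trans hxy
  have hyx : y ≤ x * (1 + B) := by nlinarith [neg_abs_le (x - y), abs_nonneg (x - y)]
  rw [le_div_iff₀ hy]
  calc |x - y| * y ≤ |x - y| * (x * (1 + B)) := by gcongr
    _ = |x - y| * x * (1 + B) := by ring
    _ ≤ B * (1 + B) := by gcongr; linarith [abs_nonneg (x - y)]

lemma abs_abs_pow_sub_le_of_norm_pow_sub_le {r n : ℕ} (hr : r ≠ 0) {y c : ℤ} (hy : y ≠ 0) {B : ℝ}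
    (hB : 0 ≤ B) (h : ‖y ^ r - c * (n ! : ℤ)‖ ≤ B * (1 + ‖y‖) ^ (r - 2)) :
    |(|(y : ℝ)|) ^ r - factorialRoot r |(c : ℝ)| n ^ r| ≤
      B * 2 ^ (r - 2) * |(y : ℝ)| ^ (r - 2) := by
  have hy1 : (1 : ℝ) ≤ |(y : ℝ)| := by exact_mod_cast Int.one_le_abs hy
  rw [Int.norm_eq_abs, Int.norm_eq_abs] at h
  push_cast at h
  calc |(|(y : ℝ)|) ^ r - factorialRoot r |(c : ℝ)| n ^ r|
      = |(|(y : ℝ) ^ r|) - (|(c : ℝ) * (n ! : ℝ)|)| := by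
        rw [factorialRoot_pow hr (abs_nonneg _), abs_pow, abs_mul, Nat.abs_cast]
    _ ≤ |(y : ℝ) ^ r - c * (n ! : ℝ)| := abs_abs_sub_abs_le _ _
    _ ≤ B * (1 + |(y : ℝ)|) ^ (r - 2) := h
    _ ≤ B * (2 * |(y : ℝ)|) ^ (r - 2) := by gcongr; linarith
    _ = B * 2 ^ (r - 2) * |(y : ℝ)| ^ (r - 2) := by rw [mul_pow, mul_assoc]

lemma hasNearbyInteger_of_norm_pow_sub_le {r n : ℕ} (hr : 2 ≤ r) {y c : ℤ} (hc : c ≠ 0) {B : ℝ}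
    (hB : 0 ≤ B) (hn : B < n !) (h : ‖y ^ r - c * (n ! : ℤ)‖ ≤ B * (1 + ‖y‖) ^ (r - 2)) :
    HasNearbyInteger r |(c : ℝ)| (1 + B * 2 ^ (r - 2) * (1 + B * 2 ^ (r - 2))) n := by
  have hc1 : (1 : ℝ) ≤ |(c : ℝ)| := by exact_mod_cast Int.one_le_abs hc
  have hg := factorialRoot_pos (r := r) (one_pos.trans_le hc1) n
  have hr0 : r ≠ 0 := by omega
  have hy : y ≠ 0 := by
    rintro rfl
    have hle : |(c : ℝ)| * n ! ≤ B := by simpa [hr0, Int.norm_eq_abs] using h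
    exact hn.not_ge ((le_mul_of_one_le_left (Nat.cast_nonneg _) hc1).trans hle)
  have hy1 : (1 : ℝ) ≤ |(y : ℝ)| := by exact_mod_cast Int.one_le_abs hy
  refine ⟨|y|, abs_pos.2 hy, ?_⟩
  rw [Int.cast_abs, Real.norm_eq_abs]
  refine (abs_sub_le_div_of_abs_pow_sub_le hy1 hg hr
    (abs_abs_pow_sub_le_of_norm_pow_sub_le hr0 hy hB h)).trans ?_
  gcongr
  exact le_add_of_nonneg_left zero_le_one

theorem eventually_hasNearbyInteger {P : ℤ[X]} (hP : 2 ≤ P.natDegree) {s : ℤ} (hs : s ≠ 0) :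
    ∃ c C₁ : ℝ, 1 ≤ c ∧ 1 ≤ C₁ ∧ ∀ᶠ n in Filter.atTop, (∃ x : ℤ, s * n ! = P.eval x) →
      HasNearbyInteger P.natDegree c C₁ n := by
  obtain ⟨c, hc, B, hB, h⟩ := exists_norm_pow_sub_mul_eval_le hP
  have hcs := mul_ne_zero hc hs
  refine ⟨|((c * s : ℤ) : ℝ)|, 1 + B * 2 ^ (P.natDegree - 2) * (1 + B * 2 ^ (P.natDegree - 2)),
    by exact_mod_cast Int.one_le_abs hcs, le_add_of_nonneg_right (by positivity),
    Filter.eventually_atTop.2 ⟨⌊B⌋₊ + 1, fun n hn ⟨x, hx⟩ => ?_⟩⟩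
  obtain ⟨y, hy⟩ := h x
  have hBn : B < n ! := (Nat.lt_of_floor_lt hn).trans_le (by exact_mod_cast n.self_le_factorial)
  exact hasNearbyInteger_of_norm_pow_sub_le hP hcs hB hBn (by rwa [mul_assoc, hx])

end CompletingThePower

section Pigeonhole

variable {r H N m : ℕ} {S : Finset ℕ}

/-- `n` starts a cluster of `m` elements of `S`, all congruent to `n` modulo `r` and lying in
`[n, n + H)`; the distances to `n` are the shifts to which the fixed-shift bound applies. -/
def StartsCluster (r H m : ℕ) (S : Finset ℕ) (n : ℕ) : Prop :=
  ∃ h : Fin m → ℕ, Function.Injective h ∧ (∀ i, h i < H) ∧ (∀ i, r ∣ h i) ∧ ∀ i, n + h i ∈ S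

lemma exists_startsCluster (hH : 0 < H) (hm : 0 < m) {p : ℕ × ℕ} {F : Finset ℕ} (hFS : F ⊆ S)
    (hF : ∀ n ∈ F, (n / H, n % r) = p) (hcard : m ≤ F.card) : ∃ n ∈ F, StartsCluster r H m S n := by
  obtain ⟨F', hF', hcard'⟩ := Finset.exists_subset_card_eq hcard
  have hne : F.Nonempty := Finset.card_pos.1 (hm.trans_le hcard)
  have hmem : ∀ i, F'.orderEmbOfFin hcard' i ∈ F := fun i => hF' (F'.orderEmbOfFin_mem hcard' i)
  have hle : ∀ i, F.min' hne ≤ F'.orderEmbOfFin hcard' i := fun i => F.min'_le _ (hmem i)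
  have heq : ∀ i, F'.orderEmbOfFin hcard' i / H = F.min' hne / H ∧
      F'.orderEmbOfFin hcard' i % r = F.min' hne % r := fun i =>
    Prod.mk.injEq .. ▸ (hF _ (hmem i)).trans (hF _ (F.min'_mem hne)).symm
  refine ⟨F.min' hne, F.min'_mem hne, fun i => F'.orderEmbOfFin hcard' i - F.min' hne,
    fun i j hij => ?_, fun i => ?_, fun i => ?_, fun i => ?_⟩
  · exact (F'.orderEmbOfFin hcard').injective ((tsub_left_inj (hle i) (hle j)).1 hij)
  · have hdiv := Nat.div_add_mod (F'.orderEmbOfFin hcard' i) H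
    have hmod := Nat.mod_lt (F'.orderEmbOfFin hcard' i) hH
    have hmin := Nat.mul_div_le (F.min' hne) H
    rw [(heq i).1] at hdiv
    change _ - _ < H
    omega
  · exact (Nat.modEq_iff_dvd' (hle i)).1 (heq i).2.symm
  · rw [Nat.add_sub_cancel' (hle i)]
    exact hFS (hmem i)

lemma image_div_mod_subset (hr : 0 < r) (hH : 0 < H) (hS : S ⊆ Finset.Ico N (2 * N)) :
    S.image (fun n => (n / H, n % r)) ⊆
      Finset.Icc (N / H) (N / H + N / H + 1) ×ˢ Finset.range r := by
  refine Finset.image_subset_iff.2 fun n hn => ?_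
  obtain ⟨hNn, hnN⟩ := Finset.mem_Ico.1 (hS hn)
  refine Finset.mem_product.2 ⟨Finset.mem_Icc.2 ⟨Nat.div_le_div_right hNn, ?_⟩,
    Finset.mem_range.2 (Nat.mod_lt _ hr)⟩
  have hN := Nat.lt_mul_div_succ N hH
  rw [← Nat.lt_succ_iff, Nat.div_lt_iff_lt_mul hH]
  nlinarith

lemma card_filter_not_startsCluster_le (hr : 0 < r) (hH : 0 < H)
    (hS : S ⊆ Finset.Ico N (2 * N)) :
    (S.filter fun n => ¬ StartsCluster r H (m + 1) S n).card ≤ m * ((N / H + 2) * r) := by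
  set T := S.filter fun n => ¬ StartsCluster r H (m + 1) S n
  have hTS : T ⊆ S := Finset.filter_subset _ _
  have hfibre : ∀ p ∈ T.image fun n => (n / H, n % r),
      (T.filter fun n => (n / H, n % r) = p).card ≤ m := by
    intro p _
    by_contra! hcard
    obtain ⟨n, hn, hcluster⟩ := exists_startsCluster hH m.succ_pos
      ((Finset.filter_subset _ _).trans hTS) (fun n hn => (Finset.mem_filter.1 hn).2) hcard
    exact (Finset.mem_filter.1 (Finset.mem_filter.1 hn).1).2 hcluster
  refine (Finset.card_le_mul_card_image T m hfibre).trans (Nat.mul_le_mul_left m ?_)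
  refine (Finset.card_le_card (image_div_mod_subset hr hH (hTS.trans hS))).trans_eq ?_
  rw [Finset.card_product, Nat.card_Icc, Finset.card_range]
  congr 1
  generalize N / H = q
  omega

lemma card_filter_startsCluster_le {M : ℕ}
    (hM : ∀ h : Fin m → ℕ, Function.Injective h → (∀ i, h i < H) → (∀ i, r ∣ h i) →
      ∀ T ⊆ S, (∀ n ∈ T, ∀ i, n + h i ∈ S) → T.card ≤ M) :
    (S.filter fun n => StartsCluster r H m S n).card ≤ M * H ^ m := by
  set T := S.filter fun n => StartsCluster r H m S n
  have hT : ∀ n ∈ T, StartsCluster r H m S n := fun n hn => (Finset.mem_filter.1 hn).2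
  choose! f hinj hlt hdvd hmem using hT
  have hcard : (Fintype.piFinset fun _ : Fin m => Finset.range H).card = H ^ m := by simp
  rw [← hcard]
  refine Finset.card_le_mul_card_image_of_maps_to (f := f)
    (fun n hn => Fintype.mem_piFinset.2 fun i => Finset.mem_range.2 (hlt n hn i)) M fun h _ => ?_
  obtain hempty | ⟨n₀, hn₀⟩ := (T.filter fun n => f n = h).eq_empty_or_nonempty
  · simp [hempty]
  obtain ⟨hn₀T, rfl⟩ := Finset.mem_filter.1 hn₀
  refine hM (f n₀) (hinj n₀ hn₀T) (hlt n₀ hn₀T) (hdvd n₀ hn₀T) _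
    ((Finset.filter_subset _ _).trans (Finset.filter_subset _ _)) fun n hn i => ?_
  obtain ⟨hn, hfn⟩ := Finset.mem_filter.1 hn
  exact hfn ▸ hmem n hn i

end Pigeonhole

section PowerSaving

open Filter

variable {r H N : ℕ} {c C₁ : ℝ}

lemma card_mul_le_of_hasNearbyInteger (hr : 2 ≤ r) (hH : 2 ^ 7 * r ^ 14 ≤ H)
    (hc : 1 ≤ c) (hcH : c ≤ H) (hC₁ : 1 ≤ C₁) (hC₁H : C₁ ≤ H) (hHN : H ^ 33 ≤ N) (hNH : N ≤ H ^ 34)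
    {S : Finset ℕ} (hSN : S ⊆ Finset.Ico N (2 * N)) (hS : ∀ n ∈ S, HasNearbyInteger r c C₁ n) :
    S.card * H ≤ (1 + 33 * r) * N := by
  have hH0 : 0 < H := lt_of_lt_of_le (by positivity) hH
  have hHN' : H ≤ N := (Nat.le_self_pow (by norm_num) H).trans hHN
  have hcluster : (S.filter fun n => StartsCluster r H 12 S n).card * H ≤ N := by
    have hM : (S.filter fun n => StartsCluster r H 12 S n).card ≤ N / H ^ 13 * H ^ 12 :=
      card_filter_startsCluster_le fun h hinj hlt hdvd T hTS hT =>
        (Nat.le_div_iff_mul_le (by positivity)).2 <| le_of_lt <|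
          card_mul_pow_lt_of_hasNearbyInteger hr hH hc hcH hC₁ hC₁H hHN hNH hinj
            (fun i => (hlt i).le) hdvd (hTS.trans hSN) fun n hn i => hS _ (hT n hn i)
    calc _ ≤ N / H ^ 13 * H ^ 12 * H := Nat.mul_le_mul_right H hM
      _ = N / H ^ 13 * H ^ 13 := by ring
      _ ≤ N := Nat.div_mul_le_self N _
  have hisolated : (S.filter fun n => ¬ StartsCluster r H 12 S n).card * H ≤ 33 * r * N := by
    have hNH' : N / H * H ≤ N := Nat.div_mul_le_self N H
    calc _ ≤ 11 * ((N / H + 2) * r) * H :=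
          Nat.mul_le_mul_right H (card_filter_not_startsCluster_le (by omega) hH0 hSN)
      _ = 11 * r * (N / H * H + 2 * H) := by ring
      _ ≤ 11 * r * (3 * N) := Nat.mul_le_mul_left _ (by omega)
      _ = 33 * r * N := by ring
  calc S.card * H = (S.filter fun n => StartsCluster r H 12 S n).card * H +
        (S.filter fun n => ¬ StartsCluster r H 12 S n).card * H := by
        rw [← add_mul, Finset.card_filter_add_card_filter_not]
    _ ≤ N + 33 * r * N := add_le_add hcluster hisolated
    _ = (1 + 33 * r) * N := by ring

lemma eventually_exists_pow_le_le_pow_succ (k B : ℕ) :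
    ∀ᶠ N in atTop, ∃ H : ℕ, B ≤ H ∧ H ^ k ≤ N ∧ N ≤ H ^ (k + 1) := by
  filter_upwards [eventually_gt_atTop ((B + 2 ^ (k + 1)) ^ (k + 1))] with N hN
  have hex : ∃ H : ℕ, N ≤ H ^ (k + 1) := ⟨N, Nat.le_self_pow k.succ_ne_zero N⟩
  obtain ⟨H, hH, hmin⟩ : ∃ H, N ≤ H ^ (k + 1) ∧ ∀ m < H, m ^ (k + 1) < N :=
    ⟨Nat.find hex, Nat.find_spec hex, fun m hm => not_le.1 (Nat.find_min hex hm)⟩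
  have hBH : B + 2 ^ (k + 1) < H := lt_of_pow_lt_pow_left' (k + 1) (hN.trans_le hH)
  have hH2 : 2 ≤ H := by
    have := Nat.one_le_two_pow (n := k + 1)
    omega
  refine ⟨H, (Nat.le_add_right _ _).trans hBH.le, ?_, hH⟩
  have hpow : 2 ^ (k + 1) * H ^ k ≤ 2 ^ (k + 1) * (H - 1) ^ (k + 1) := calc
    2 ^ (k + 1) * H ^ k ≤ H * H ^ k := Nat.mul_le_mul_right _ (by omega)
    _ = H ^ (k + 1) := (pow_succ' H k).symm
    _ ≤ (2 * (H - 1)) ^ (k + 1) := Nat.pow_le_pow_left (by omega) _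
    _ = 2 ^ (k + 1) * (H - 1) ^ (k + 1) := mul_pow ..
  exact (Nat.le_of_mul_le_mul_left hpow (by positivity)).trans (hmin _ (by omega)).le

lemma le_mul_rpow_of_mul_le_mul {a x y K : ℝ} (hK : 0 ≤ K) (hx : 0 < x) (hy : 0 < y) {k : ℕ}
    (hxy : x ≤ y ^ (k + 1)) (h : a * y ≤ K * x) : a ≤ K * x ^ ((k : ℝ) / (k + 1)) := by
  have hroot : x ^ (((k + 1 : ℕ) : ℝ)⁻¹) ≤ y :=
    (Real.rpow_inv_le_iff_of_pos hx.le hy.le (by positivity)).2 (by rwa [Real.rpow_natCast])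
  refine le_of_mul_le_mul_right ?_ hy
  calc a * y ≤ K * x := h
    _ = K * x ^ ((k : ℝ) / (k + 1)) * x ^ (((k + 1 : ℕ) : ℝ)⁻¹) := by
      rw [mul_assoc, ← Real.rpow_add hx]
      push_cast
      rw [inv_eq_one_div, ← add_div, div_self (by positivity), Real.rpow_one]
    _ ≤ K * x ^ ((k : ℝ) / (k + 1)) * y := by gcongr

lemma exists_forall_le_mul_of_eventually_le {f g : ℕ → ℝ} {K : ℝ} (hK : 0 ≤ K)
    (hf : ∀ N, f N ≤ N) (hg : ∀ N, 0 < N → 1 ≤ g N) (h : ∀ᶠ N in atTop, f N ≤ K * g N) :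
    ∃ C, 0 < C ∧ ∀ N, 0 < N → f N ≤ C * g N := by
  obtain ⟨N₀, hN₀⟩ := eventually_atTop.1 h
  refine ⟨K + N₀ + 1, by positivity, fun N hN => ?_⟩
  have hgN := hg N hN
  obtain hlt | hle := lt_or_ge N N₀
  · have hNN₀ : (N : ℝ) ≤ N₀ := by exact_mod_cast hlt.le
    calc f N ≤ K + N₀ + 1 := by linarith [hf N]
      _ ≤ (K + N₀ + 1) * g N := le_mul_of_one_le_right (by positivity) hgN
  · refine (hN₀ N hle).trans ?_
    gcongr
    linarith [(Nat.cast_nonneg N₀ : (0 : ℝ) ≤ N₀)]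

lemma eventually_card_filter_le_mul_rpow {p : ℕ → Prop} (hr : 2 ≤ r) (hc : 1 ≤ c) (hC₁ : 1 ≤ C₁)
    (hp : ∀ᶠ n in atTop, p n → HasNearbyInteger r c C₁ n) :
    ∀ᶠ N : ℕ in atTop, (((Finset.Ico N (2 * N)).filter p).card : ℝ) ≤
      (1 + 33 * r) * (N : ℝ) ^ ((33 : ℝ) / 34) := by
  filter_upwards [eventually_exists_pow_le_le_pow_succ 33 (2 ^ 7 * r ^ 14 + ⌈c⌉₊ + ⌈C₁⌉₊),
    eventually_gt_atTop 0, eventually_forall_ge_atTop.2 hp] with N ⟨H, hH, hHN, hNH⟩ hN hpN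
  have hcH : c ≤ H := (Nat.le_ceil c).trans (by exact_mod_cast (by omega : ⌈c⌉₊ ≤ H))
  have hC₁H : C₁ ≤ H := (Nat.le_ceil C₁).trans (by exact_mod_cast (by omega : ⌈C₁⌉₊ ≤ H))
  have hcard := card_mul_le_of_hasNearbyInteger hr (by omega) hc hcH hC₁ hC₁H hHN hNH
    (Finset.filter_subset p (Finset.Ico N (2 * N))) fun n hn =>
      hpN n (Finset.mem_Ico.1 (Finset.mem_filter.1 hn).1).1 (Finset.mem_filter.1 hn).2
  have hsaving := le_mul_rpow_of_mul_le_mul (a := ((Finset.Ico N (2 * N)).filter p).card)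
    (K := 1 + 33 * r) (k := 33) (by positivity) (Nat.cast_pos.2 hN)
    (one_pos.trans_le (hc.trans hcH)) (by exact_mod_cast hNH) (by exact_mod_cast hcard)
  norm_num at hsaving ⊢
  exact hsaving

theorem exists_card_filter_le_mul_rpow {p : ℕ → Prop} (hr : 2 ≤ r) (hc : 1 ≤ c) (hC₁ : 1 ≤ C₁)
    (hp : ∀ᶠ n in atTop, p n → HasNearbyInteger r c C₁ n) :
    ∃ C : ℝ, 0 < C ∧ ∀ N : ℕ, 0 < N →
      (((Finset.Ico N (2 * N)).filter p).card : ℝ) ≤ C * (N : ℝ) ^ ((33 : ℝ) / 34) := by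
  refine exists_forall_le_mul_of_eventually_le (K := 1 + 33 * r) (by positivity) (fun N => ?_)
    (fun N hN => Real.one_le_rpow (by exact_mod_cast hN) (by norm_num))
    (eventually_card_filter_le_mul_rpow hr hc hC₁ hp)
  have hcard := Finset.card_filter_le (Finset.Ico N (2 * N)) p
  rw [Nat.card_Ico] at hcard
  exact_mod_cast hcard.trans (by omega)

end PowerSaving

end PolynomialFactorial

/-- **Power saving for number of solutions** (Theorem 1.1).
Let `P` be a polynomial with integer coefficients of degree `r ≥ 2` and let `s` be a nonzero
integer. Then there exists a positive constant `C`, depending only on `P` and `s`, such that for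
all positive integers `N`, the number of integers `n` with `N ≤ n < 2N` for which there exists an
integer `x` with `s·n! = P(x)` is at most `C·N^(33/34)`. -/
theorem polynomial_factorial_power_saving
    (P : Polynomial ℤ) (hP : 2 ≤ P.natDegree) (s : ℤ) (hs : s ≠ 0) :
    ∃ C : ℝ, 0 < C ∧ ∀ N : ℕ, 0 < N →
      (((Finset.Ico N (2 * N)).filter
          (fun n => ∃ x : ℤ, s * (n ! : ℤ) = P.eval x)).card : ℝ)
        ≤ C * (N : ℝ) ^ ((33 : ℝ) / 34) := by
  obtain ⟨c, C₁, hc, hC₁, hnear⟩ := PolynomialFactorial.eventually_hasNearbyInteger hP hs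
  exact PolynomialFactorial.exists_card_filter_le_mul_rpow hP hc hC₁ hnear
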